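/- arXiv:2306.10465 — 2 statements merged into one kernel-verified Lean document; each statement's English description precedes it below -/
import Mathlib

section
/- Let n ≥ 1 be an integer, 0 < α < n, 1 < p < n/α, and define q by 1/q = 1/p − α/n. Let φ and ψ be positive measurable functions on ℝ^n × (0,∞) such that there is a constant C > 0, independent of x ∈ ℝ^n and r > 0, with sup_{r<t<∞} (essinf_{t<s<∞} φ(x,s) s^{n/p}) t^{−n/q} ≤ C ψ(x,r). Then there exists a constant C' > 0 such that for all f ∈ 𝓛^{p,φ}(ℝ^n), the fractional maximal function M_α f(x) = sup_{B ∋ x} |B|^{α/n − 1} ∫_B |f(y)| dy (supremum over open Euclidean balls B containing x) satisfies ‖M_α f‖_{𝓛^{q,ψ}(ℝ^n)} ≤ C' ‖f‖_{𝓛^{p,φ}(ℝ^n)}. -/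
/-!
The proof localises `M_α` around a ball `B(x,r)`. A ball through a point of `B(x,r)` either lies in
`B(x,4r)`, so that only the restriction of `f` to `B(x,4r)` matters, or has radius `t > r` and lies
in `B(x,4t)`, where Hölder's inequality bounds its contribution by a multiple of
`(4t)^{-n/q} ‖f‖_{L^p(B(x,4t))}` (`maxOp_local`). The restricted part is estimated by the
`L^p → L^q` bound for `M_α` (`frac_strong_type`), which gives a multiple of
`(4r)^{-n/q} ‖f‖_{L^p(B(x,4r))}` after averaging over `B(x,r)`. Both are quantities
`T^{-n/q} ‖f‖_{L^p(B(x,T))}` with `T > r`; since `‖f‖_{L^p(B(x,T))}` is at most a multiple of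
`‖f‖_{𝓛^{p,φ}} φ(x,s) s^{n/p}` for every `s > T`, the hypothesis on `φ` and `ψ` bounds them by a
multiple of `ψ(x,r) ‖f‖_{𝓛^{p,φ}}` (`morrey_key`).

The `L^p → L^q` bound follows from Hedberg's pointwise inequality
`M_α g ≤ (M g)^{1 - αp/n} ‖g‖_p^{αp/n}` (`hedberg`) and the Hardy–Littlewood maximal theorem
(`strong_type`), itself obtained from the Vitali covering theorem through the weak `(1,1)` bound
(`weak_type`) and the layer-cake formula.
-/


open MeasureTheory Metric ENNReal

/-- The fractional maximal operator `M_α` on `ℝⁿ`: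
`M_α f (x) = sup_{B ∋ x} |B|^{α/n - 1} ∫_B |f|`, supremum over open balls containing `x`. -/
noncomputable def fracMax (n : ℕ) (α : ℝ) (f : EuclideanSpace ℝ (Fin n) → ℝ)
    (x : EuclideanSpace ℝ (Fin n)) : ℝ≥0∞ :=
  ⨆ (c : EuclideanSpace ℝ (Fin n)) (t : ℝ) (_ : x ∈ ball c t),
    volume (ball c t) ^ (α / (n : ℝ) - 1) * ∫⁻ y in ball c t, ENNReal.ofReal |f y|

/-- The norm of the generalized Morrey space `𝓛^{p,φ}(ℝⁿ)`. -/
noncomputable def morreyNorm {n : ℕ} (p : ℝ) (φ : EuclideanSpace ℝ (Fin n) → ℝ → ℝ)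
    (f : EuclideanSpace ℝ (Fin n) → ℝ) : ℝ≥0∞ :=
  ⨆ (x : EuclideanSpace ℝ (Fin n)) (r : ℝ) (_ : 0 < r),
    ENNReal.ofReal ((φ x r)⁻¹) *
      ((volume (ball x r))⁻¹ * ∫⁻ y in ball x r, ENNReal.ofReal (|f y| ^ p)) ^ (1 / p)

/-- The generalized Morrey norm for an `ℝ≥0∞`-valued function. -/
noncomputable def morreyNormE {n : ℕ} (p : ℝ) (φ : EuclideanSpace ℝ (Fin n) → ℝ → ℝ)
    (g : EuclideanSpace ℝ (Fin n) → ℝ≥0∞) : ℝ≥0∞ :=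
  ⨆ (x : EuclideanSpace ℝ (Fin n)) (r : ℝ) (_ : 0 < r),
    ENNReal.ofReal ((φ x r)⁻¹) *
      ((volume (ball x r))⁻¹ * ∫⁻ y in ball x r, (g y) ^ p) ^ (1 / p)

/-! ### The maximal operator and the Hardy–Littlewood maximal theorem -/

/-- The uncentred maximal operator `g ↦ sup_{B ∋ x} |B|^{a - 1} ∫_B g` on `[0, ∞]`-valued
functions, with the exponent normalised so that `a = 0` is the Hardy–Littlewood operator and
`a = α / n` the fractional operator `M_α`. -/
noncomputable def maxOp (n : ℕ) (a : ℝ) (g : EuclideanSpace ℝ (Fin n) → ℝ≥0∞)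
    (x : EuclideanSpace ℝ (Fin n)) : ℝ≥0∞ :=
  ⨆ (c : EuclideanSpace ℝ (Fin n)) (t : ℝ) (_ : x ∈ ball c t),
    volume (ball c t) ^ (a - 1) * ∫⁻ y in ball c t, g y

theorem le_maxOp (n : ℕ) (a : ℝ) (g : EuclideanSpace ℝ (Fin n) → ℝ≥0∞)
    {x c : EuclideanSpace ℝ (Fin n)} {t : ℝ} (h : x ∈ ball c t) :
    volume (ball c t) ^ (a - 1) * ∫⁻ y in ball c t, g y ≤ maxOp n a g x := by
  unfold maxOp
  exact le_iSup_of_le c (le_iSup_of_le t (le_iSup_of_le h le_rfl))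

/-- The maximal function is lower semicontinuous, hence measurable. -/
theorem measurable_maxOp (n : ℕ) (a : ℝ) (g : EuclideanSpace ℝ (Fin n) → ℝ≥0∞) :
    Measurable (maxOp n a g) := by
  refine measurable_of_Ioi fun b => IsOpen.measurableSet ?_
  have : maxOp n a g ⁻¹' Set.Ioi b =
      ⋃ (c : EuclideanSpace ℝ (Fin n)) (t : ℝ)
        (_ : b < volume (ball c t) ^ (a - 1) * ∫⁻ y in ball c t, g y), ball c t := by
    ext x
    simp only [maxOp, Set.mem_preimage, Set.mem_Ioi, lt_iSup_iff, Set.mem_iUnion, exists_prop]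
    constructor <;> rintro ⟨c, t, h1, h2⟩ <;> exact ⟨c, t, h2, h1⟩
  rw [this]
  exact isOpen_iUnion fun c => isOpen_iUnion fun t => isOpen_iUnion fun _ => isOpen_ball

theorem volume_ball_eq (n : ℕ) (c : EuclideanSpace ℝ (Fin n)) {t : ℝ} (ht : 0 < t) :
    volume (ball c t) =
      ENNReal.ofReal (t ^ n) * volume (ball (0 : EuclideanSpace ℝ (Fin n)) 1) := by
  simpa using Measure.addHaar_ball_of_pos volume c ht

theorem volume_ball_ne_zero (n : ℕ) (c : EuclideanSpace ℝ (Fin n)) {t : ℝ} (ht : 0 < t) :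
    volume (ball c t) ≠ 0 := (measure_ball_pos volume c ht).ne'

theorem volume_ball_ne_top (n : ℕ) (c : EuclideanSpace ℝ (Fin n)) (t : ℝ) :
    volume (ball c t) ≠ ⊤ := measure_ball_lt_top.ne

/-- Weak type `(1,1)` bound for the Hardy–Littlewood operator, by the Vitali covering theorem with
dilation factor `4`. -/
theorem weak_type (n : ℕ) (hn : 1 ≤ n) (g : EuclideanSpace ℝ (Fin n) → ℝ≥0∞)
    (l : ℝ≥0∞) (hl0 : l ≠ 0) (hlt : l ≠ ⊤) :
    volume {x | l < maxOp n 0 g x} ≤ 4 ^ n * (l⁻¹ * ∫⁻ y, g y) := by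
  by_cases hI : ∫⁻ y, g y = ⊤
  · rw [hI, ENNReal.mul_top (by simpa using hlt), ENNReal.mul_top (by positivity)]
    exact le_top
  set v := volume (ball (0 : EuclideanSpace ℝ (Fin n)) 1) with hv
  have hv0 : v ≠ 0 := volume_ball_ne_zero n 0 one_pos
  have hvt : v ≠ ⊤ := volume_ball_ne_top n 0 1
  let S : Set (EuclideanSpace ℝ (Fin n) × ℝ) :=
    {b | 0 < b.2 ∧ l * volume (ball b.1 b.2) ≤ ∫⁻ y in ball b.1 b.2, g y}
  have hSR : ∀ b ∈ S, b.2 ≤ max 1 (((∫⁻ y, g y) / (l * v)).toReal) := by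
    rintro ⟨c, t⟩ ⟨ht, hb⟩
    simp only at ht hb ⊢
    by_contra! hlt'
    obtain ⟨h1, h2⟩ := max_lt_iff.1 hlt'
    have h3 : l * v * ENNReal.ofReal t ≤ ∫⁻ y, g y := by
      calc l * v * ENNReal.ofReal t ≤ l * v * ENNReal.ofReal (t ^ n) := by
            gcongr
            exact le_self_pow₀ h1.le (by omega)
        _ = l * volume (ball c t) := by rw [volume_ball_eq n c ht]; ring
        _ ≤ _ := hb.trans (setLIntegral_le_lintegral _ _)
    have hlv0 : l * v ≠ 0 := mul_ne_zero hl0 hv0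
    have hlvt : l * v ≠ ⊤ := ENNReal.mul_ne_top hlt hvt
    have h4 : ENNReal.ofReal t ≤ (∫⁻ y, g y) / (l * v) := by
      rw [ENNReal.le_div_iff_mul_le (Or.inl hlv0) (Or.inl hlvt), mul_comm]
      exact h3
    have h5 := (ENNReal.ofReal_le_iff_le_toReal (ENNReal.div_ne_top hI hlv0)).1 h4
    linarith
  obtain ⟨u, huS, hud, hcov⟩ := Vitali.exists_disjoint_subfamily_covering_enlargement_ball
    S Prod.fst Prod.snd _ hSR 4 (by norm_num)
  have hcount : u.Countable := hud.countable_of_isOpen (fun _ _ => isOpen_ball)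
    (fun b hb => ⟨b.1, mem_ball_self (huS hb).1⟩)
  have hsub : {x | l < maxOp n 0 g x} ⊆ ⋃ b ∈ u, ball b.1 (4 * b.2) := by
    intro x hx
    simp only [maxOp, Set.mem_ofPred_eq, lt_iSup_iff] at hx
    obtain ⟨c, t, hxc, hlt'⟩ := hx
    have ht : 0 < t := pos_of_mem_ball hxc
    have hbS : (c, t) ∈ S := by
      refine ⟨ht, ?_⟩
      simp only
      rw [zero_sub, ENNReal.rpow_neg_one, mul_comm, ← div_eq_mul_inv] at hlt'
      exact (ENNReal.le_div_iff_mul_le (Or.inl (volume_ball_ne_zero n c ht))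
        (Or.inl (volume_ball_ne_top n c t))).1 hlt'.le
    obtain ⟨b, hbu, hb⟩ := hcov _ hbS
    exact Set.mem_biUnion hbu (hb hxc)
  have : Countable u := hcount.to_subtype
  calc volume {x | l < maxOp n 0 g x}
      ≤ volume (⋃ b ∈ u, ball b.1 (4 * b.2)) := measure_mono hsub
    _ ≤ ∑' b : u, volume (ball b.1.1 (4 * b.1.2)) := measure_biUnion_le _ hcount _
    _ ≤ ∑' b : u, 4 ^ n * (l⁻¹ * ∫⁻ y in ball b.1.1 b.1.2, g y) := by
        refine ENNReal.tsum_le_tsum fun b => ?_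
        have hb := huS b.2
        rw [volume_ball_eq n _ (by linarith [hb.1]), mul_pow,
          ENNReal.ofReal_mul (by positivity), mul_assoc, ← volume_ball_eq n b.1.1 hb.1]
        have h4 : ENNReal.ofReal (4 ^ n) = 4 ^ n := by
          rw [ENNReal.ofReal_pow (by norm_num)]; norm_num
        rw [h4]
        gcongr
        rw [← one_mul (volume _), ← ENNReal.inv_mul_cancel hl0 hlt, mul_assoc]
        gcongr
        exact hb.2
    _ = 4 ^ n * (l⁻¹ * ∫⁻ y in ⋃ b ∈ u, ball b.1 b.2, g y) := by
        rw [ENNReal.tsum_mul_left, ENNReal.tsum_mul_left,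
          lintegral_biUnion hcount (fun _ _ => measurableSet_ball) hud]
    _ ≤ _ := by
        gcongr
        exact Measure.restrict_le_self

/-- Only the part of `g` above height `l / 2` contributes to the superlevel set
`{M g > l}`. -/
theorem weak_type_truncated (n : ℕ) (hn : 1 ≤ n) (g : EuclideanSpace ℝ (Fin n) → ℝ≥0∞)
    (l : ℝ≥0∞) (hl0 : l ≠ 0) (hlt : l ≠ ⊤) :
    volume {x | l < maxOp n 0 g x} ≤
      4 ^ n * ((l / 2)⁻¹ * ∫⁻ y, {y | l / 2 < g y}.indicator g y) := by
  refine le_trans (measure_mono ?_) (weak_type n hn _ (l / 2) (by simp [hl0])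
    (ENNReal.div_ne_top hlt (by norm_num)))
  intro x hx
  simp only [Set.mem_ofPred_eq] at hx ⊢
  by_contra! hle
  refine absurd hx (not_lt.2 ?_)
  rw [maxOp]
  refine iSup_le fun c => iSup_le fun t => iSup_le fun hxc => ?_
  have ht : 0 < t := pos_of_mem_ball hxc
  have h1 : volume (ball c t) ^ ((0 : ℝ) - 1) *
      ∫⁻ y in ball c t, {y | l / 2 < g y}.indicator g y ≤ l / 2 :=
    (le_maxOp n 0 _ hxc).trans hle
  calc volume (ball c t) ^ ((0 : ℝ) - 1) * ∫⁻ y in ball c t, g y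
      ≤ volume (ball c t) ^ ((0 : ℝ) - 1) *
        ∫⁻ y in ball c t, ({y | l / 2 < g y}.indicator g y + l / 2) := by
        gcongr with y
        by_cases hy : l / 2 < g y
        · simp [Set.indicator, hy]
        · simpa [Set.indicator, hy] using not_lt.1 hy
    _ = volume (ball c t) ^ ((0 : ℝ) - 1) *
        (∫⁻ y in ball c t, {y | l / 2 < g y}.indicator g y) + l / 2 := by
        rw [lintegral_add_right _ measurable_const, setLIntegral_const, mul_add, zero_sub,
          ENNReal.rpow_neg_one, mul_comm (l / 2), ← mul_assoc (volume _)⁻¹ (volume _),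
          ENNReal.inv_mul_cancel (volume_ball_ne_zero n c ht) (volume_ball_ne_top n c t), one_mul]
    _ ≤ l / 2 + l / 2 := add_le_add h1 le_rfl
    _ = l := ENNReal.add_halves l

/-- The layer-cake identity `∫_0^u s λ^{s-1} dλ = u^s` for `u ∈ [0, ∞]`. -/
theorem layer (s : ℝ) (hs : 0 < s) (u : ℝ≥0∞) :
    ENNReal.ofReal s * ∫⁻ l in Set.Ioi (0 : ℝ),
      {l : ℝ | ENNReal.ofReal l < u}.indicator (fun l => ENNReal.ofReal (l ^ (s - 1))) l
      = u ^ s := by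
  have key : ∀ w : ℝ, 0 ≤ w → ENNReal.ofReal s * ∫⁻ l in Set.Ioi (0 : ℝ),
      {l : ℝ | ENNReal.ofReal l < ENNReal.ofReal w}.indicator
        (fun l => ENNReal.ofReal (l ^ (s - 1))) l = ENNReal.ofReal w ^ s := by
    intro w hw
    -- the layer-cake formula for a constant function on a one-point space
    have h := lintegral_rpow_eq_lintegral_meas_lt_mul (Measure.dirac ()) (f := fun _ => w)
      (Filter.Eventually.of_forall fun _ => hw) aemeasurable_const hs
    rw [lintegral_dirac] at h
    rw [ENNReal.ofReal_rpow_of_nonneg hw hs.le, h]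
    congr 1
    refine setLIntegral_congr_fun measurableSet_Ioi fun l hl => ?_
    have hl' : (0 : ℝ) < l := hl
    by_cases hlw : l < w
    · simp [Set.indicator, hlw, ENNReal.ofReal_lt_ofReal_iff (hl'.trans hlw)]
    · have : ¬ ENNReal.ofReal l < ENNReal.ofReal w := by
        simpa using ENNReal.ofReal_le_ofReal (not_lt.1 hlw)
      simp [Set.indicator, hlw, this]
  rcases eq_or_ne u ⊤ with rfl | hu
  · rw [ENNReal.top_rpow_of_pos hs]
    refine ENNReal.eq_top_of_forall_nnreal_le fun r => ?_
    have h := key ((r : ℝ) ^ (1 / s)) (by positivity)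
    rw [ENNReal.ofReal_rpow_of_nonneg (by positivity) hs.le, ← Real.rpow_mul (by positivity),
      one_div, inv_mul_cancel₀ hs.ne', Real.rpow_one, ENNReal.ofReal_coe_nnreal] at h
    rw [← h]
    gcongr
    exact le_top
  · have := key u.toReal ENNReal.toReal_nonneg
    rwa [ENNReal.ofReal_toReal hu] at this

/-- Strong type `(p,p)` bound for the Hardy–Littlewood operator: integrate the truncated weak type
bound against `p l^{p-1} dl` and exchange the order of integration. -/
theorem strong_type (n : ℕ) (hn : 1 ≤ n) (p : ℝ) (hp : 1 < p) :
    ∃ D : ℝ≥0∞, D ≠ ⊤ ∧ ∀ g : EuclideanSpace ℝ (Fin n) → ℝ≥0∞, Measurable g →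
      ∫⁻ x, maxOp n 0 g x ^ p ≤ D * ∫⁻ x, g x ^ p := by
  have hp1 : 0 < p - 1 := by linarith
  have hc0 : ENNReal.ofReal (p - 1) ≠ 0 := by simpa using hp
  have hct : ENNReal.ofReal (p - 1) ≠ ⊤ := ENNReal.ofReal_ne_top
  refine ⟨ENNReal.ofReal p * (4 ^ n * 2 * ((ENNReal.ofReal (p - 1))⁻¹ * 2 ^ (p - 1))), ?_, ?_⟩
  · refine ENNReal.mul_ne_top ENNReal.ofReal_ne_top (ENNReal.mul_ne_top
      (ENNReal.mul_ne_top (by simp) (by simp)) (ENNReal.mul_ne_top (by simpa using hp) ?_))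
    exact ENNReal.rpow_ne_top_of_nonneg hp1.le (by simp)
  intro g hg
  have hM := measurable_maxOp n 0 g
  have hpow : ∀ s : ℝ, Measurable fun l : ℝ => ENNReal.ofReal (l ^ s) := fun s => by fun_prop
  -- superlevel sets, with the level as second variable
  have hmeas1 : Measurable (fun z : EuclideanSpace ℝ (Fin n) × ℝ =>
      {l : ℝ | ENNReal.ofReal l < maxOp n 0 g z.1}.indicator
        (fun l => ENNReal.ofReal (l ^ (p - 1))) z.2) := by
    have hset : MeasurableSet {z : EuclideanSpace ℝ (Fin n) × ℝ |
        ENNReal.ofReal z.2 < maxOp n 0 g z.1} :=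
      measurableSet_lt (by fun_prop) (hM.comp measurable_fst)
    exact ((hpow (p - 1)).comp measurable_snd).indicator hset
  have hmeas2 : Measurable (fun z : EuclideanSpace ℝ (Fin n) × ℝ =>
      g z.1 * {l : ℝ | ENNReal.ofReal l < 2 * g z.1}.indicator
        (fun l => ENNReal.ofReal (l ^ (p - 1 - 1))) z.2) := by
    have hset : MeasurableSet {z : EuclideanSpace ℝ (Fin n) × ℝ |
        ENNReal.ofReal z.2 < 2 * g z.1} :=
      measurableSet_lt (by fun_prop) ((hg.comp measurable_fst).const_mul 2)
    exact (hg.comp measurable_fst).mul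
      (((hpow (p - 1 - 1)).comp measurable_snd).indicator hset)
  have hlevel : ∀ l ∈ Set.Ioi (0 : ℝ),
      ∫⁻ x, {l : ℝ | ENNReal.ofReal l < maxOp n 0 g x}.indicator
        (fun l => ENNReal.ofReal (l ^ (p - 1))) l ≤
      4 ^ n * 2 * ∫⁻ y, g y * {l : ℝ | ENNReal.ofReal l < 2 * g y}.indicator
        (fun l => ENNReal.ofReal (l ^ (p - 1 - 1))) l := by
    intro l hl
    have hl' : (0 : ℝ) < l := hl
    set L := ENNReal.ofReal l with hL
    have hL0 : L ≠ 0 := by simpa [hL] using hl'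
    have hLt : L ≠ ⊤ := ENNReal.ofReal_ne_top
    have e1 : ∀ x, {l : ℝ | ENNReal.ofReal l < maxOp n 0 g x}.indicator
        (fun l => ENNReal.ofReal (l ^ (p - 1))) l =
        {x | L < maxOp n 0 g x}.indicator (fun _ => ENNReal.ofReal (l ^ (p - 1))) x := by
      intro x; simp [Set.indicator, hL]
    have e2 : ∀ y, g y * {l : ℝ | ENNReal.ofReal l < 2 * g y}.indicator
        (fun l => ENNReal.ofReal (l ^ (p - 1 - 1))) l =
        ENNReal.ofReal (l ^ (p - 1 - 1)) * {y | L / 2 < g y}.indicator g y := by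
      intro y
      have : L / 2 < g y ↔ L < 2 * g y := by
        rw [ENNReal.div_lt_iff (by simp) (by simp), mul_comm]
      simp only [Set.indicator, Set.mem_ofPred_eq, this, ← hL]
      split_ifs <;> simp [mul_comm]
    simp_rw [e1, e2]
    rw [lintegral_indicator_const (measurableSet_lt measurable_const hM),
      lintegral_const_mul' _ _ ENNReal.ofReal_ne_top]
    have e3 : ENNReal.ofReal (l ^ (p - 1)) * (L / 2)⁻¹ = 2 * ENNReal.ofReal (l ^ (p - 1 - 1)) := by
      rw [ENNReal.inv_div (by simp) (by simp), Real.rpow_sub_one hl'.ne' (p - 1),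
        ENNReal.ofReal_div_of_pos hl', ← hL, div_eq_mul_inv, div_eq_mul_inv]
      ring
    calc ENNReal.ofReal (l ^ (p - 1)) * volume {x | L < maxOp n 0 g x}
        ≤ ENNReal.ofReal (l ^ (p - 1)) *
          (4 ^ n * ((L / 2)⁻¹ * ∫⁻ y, {y | L / 2 < g y}.indicator g y)) := by
          gcongr
          exact weak_type_truncated n hn g L hL0 hLt
      _ = 4 ^ n * (ENNReal.ofReal (l ^ (p - 1)) * (L / 2)⁻¹) *
          ∫⁻ y, {y | L / 2 < g y}.indicator g y := by ring
      _ = _ := by rw [e3]; ring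
  have hinner : ∀ y, ∫⁻ l in Set.Ioi (0 : ℝ), g y * {l : ℝ | ENNReal.ofReal l < 2 * g y}.indicator
        (fun l => ENNReal.ofReal (l ^ (p - 1 - 1))) l =
      (ENNReal.ofReal (p - 1))⁻¹ * 2 ^ (p - 1) * g y ^ p := by
    intro y
    rw [lintegral_const_mul _ ((hpow _).indicator (measurableSet_lt (by fun_prop) (by fun_prop)))]
    have h := layer (p - 1) hp1 (2 * g y)
    rw [ENNReal.mul_rpow_of_nonneg _ _ hp1.le] at h
    have h2 : g y ^ p = g y * g y ^ (p - 1) := by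
      conv_rhs => enter [1]; rw [← ENNReal.rpow_one (g y)]
      rw [← ENNReal.rpow_add_of_nonneg _ _ zero_le_one hp1.le]
      congr 1; ring
    rw [h2, show (ENNReal.ofReal (p - 1))⁻¹ * 2 ^ (p - 1) * (g y * g y ^ (p - 1)) =
      g y * ((ENNReal.ofReal (p - 1))⁻¹ * (2 ^ (p - 1) * g y ^ (p - 1))) by ring, ← h,
      ← mul_assoc (ENNReal.ofReal (p - 1))⁻¹, ENNReal.inv_mul_cancel hc0 hct, one_mul]
  calc ∫⁻ x, maxOp n 0 g x ^ p
      = ∫⁻ x, ENNReal.ofReal p * ∫⁻ l in Set.Ioi (0 : ℝ),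
        {l : ℝ | ENNReal.ofReal l < maxOp n 0 g x}.indicator
          (fun l => ENNReal.ofReal (l ^ (p - 1))) l := by
        refine lintegral_congr fun x => (layer p (by linarith) _).symm
    _ = ENNReal.ofReal p * ∫⁻ l in Set.Ioi (0 : ℝ), ∫⁻ x,
        {l : ℝ | ENNReal.ofReal l < maxOp n 0 g x}.indicator
          (fun l => ENNReal.ofReal (l ^ (p - 1))) l := by
        rw [lintegral_const_mul' _ _ ENNReal.ofReal_ne_top,
          lintegral_lintegral_swap hmeas1.aemeasurable]
    _ ≤ ENNReal.ofReal p * ∫⁻ l in Set.Ioi (0 : ℝ), 4 ^ n * 2 * ∫⁻ y,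
        g y * {l : ℝ | ENNReal.ofReal l < 2 * g y}.indicator
          (fun l => ENNReal.ofReal (l ^ (p - 1 - 1))) l := by
        gcongr ENNReal.ofReal p * ?_
        exact setLIntegral_mono' measurableSet_Ioi hlevel
    _ = ENNReal.ofReal p * (4 ^ n * 2 * ∫⁻ y, ∫⁻ l in Set.Ioi (0 : ℝ),
        g y * {l : ℝ | ENNReal.ofReal l < 2 * g y}.indicator
          (fun l => ENNReal.ofReal (l ^ (p - 1 - 1))) l) := by
        rw [lintegral_const_mul' _ _ (ENNReal.mul_ne_top (by simp) (by simp)),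
          ← lintegral_lintegral_swap hmeas2.aemeasurable]
    _ = _ := by
        simp_rw [hinner]
        rw [lintegral_const_mul _ (hg.pow_const p)]
        ring

/-! ### Boundedness of the fractional maximal operator from `L^p` to `L^q` -/

/-- Hölder's inequality on a ball. -/
theorem holder_ball (n : ℕ) (p : ℝ) (hp : 1 < p) (g : EuclideanSpace ℝ (Fin n) → ℝ≥0∞)
    (hg : Measurable g) (c : EuclideanSpace ℝ (Fin n)) (t : ℝ) :
    ∫⁻ y in ball c t, g y ≤
      volume (ball c t) ^ (1 - 1 / p) * (∫⁻ y in ball c t, g y ^ p) ^ (1 / p) := by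
  have hpq := Real.HolderConjugate.conjExponent hp
  have h := ENNReal.lintegral_mul_le_Lp_mul_Lq (volume.restrict (ball c t)) hpq
    hg.aemeasurable (aemeasurable_const (b := (1 : ℝ≥0∞)))
  have hinv : 1 / p.conjExponent = 1 - 1 / p := by
    have := hpq.inv_add_inv_eq_one
    rw [one_div, one_div]; linarith
  rw [hinv] at h
  simpa [mul_comm] using h

/-- Hedberg's pointwise inequality: with `θ = a p`, Hölder on each ball gives
`|B|^{a-1} ∫_B g ≤ (|B|^{-1} ∫_B g)^{1-θ} ‖g‖_p^θ`. -/
theorem hedberg (n : ℕ) (p a : ℝ) (hp : 1 < p) (ha : 0 < a) (hap : a * p < 1)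
    (g : EuclideanSpace ℝ (Fin n) → ℝ≥0∞) (hg : Measurable g) (x : EuclideanSpace ℝ (Fin n)) :
    maxOp n a g x ≤ maxOp n 0 g x ^ (1 - a * p) * (∫⁻ y, g y ^ p) ^ a := by
  rw [maxOp]
  refine iSup_le fun c => iSup_le fun t => iSup_le fun hxc => ?_
  have ht : 0 < t := pos_of_mem_ball hxc
  set V := volume (ball c t) with hV
  have hV0 : V ≠ 0 := volume_ball_ne_zero n c ht
  have hVt : V ≠ ⊤ := volume_ball_ne_top n c t
  set I := ∫⁻ y in ball c t, g y with hI
  set J := ∫⁻ y, g y ^ p with hJ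
  have hap0 : 0 < a * p := by positivity
  have h1 : I ≤ V ^ (1 - 1 / p) * J ^ (1 / p) := by
    refine (holder_ball n p hp g hg c t).trans ?_
    gcongr
    exact setLIntegral_le_lintegral _ _
  have h2 : I ^ (a * p) ≤ V ^ (a * p - a) * J ^ a := by
    have := ENNReal.rpow_le_rpow h1 hap0.le
    rw [ENNReal.mul_rpow_of_nonneg _ _ hap0.le, ← ENNReal.rpow_mul, ← ENNReal.rpow_mul] at this
    convert this using 3 <;> field_simp
  have h3 : I = I ^ (1 - a * p) * I ^ (a * p) := by
    rw [← ENNReal.rpow_add_of_nonneg _ _ (by linarith) hap0.le]; simp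
  calc V ^ (a - 1) * I = V ^ (a - 1) * (I ^ (1 - a * p) * I ^ (a * p)) := by rw [← h3]
    _ ≤ V ^ (a - 1) * (I ^ (1 - a * p) * (V ^ (a * p - a) * J ^ a)) := by gcongr
    _ = (V ^ (a - 1) * V ^ (a * p - a)) * I ^ (1 - a * p) * J ^ a := by ring
    _ = (V ^ ((0 : ℝ) - 1) * I) ^ (1 - a * p) * J ^ a := by
        rw [← ENNReal.rpow_add _ _ hV0 hVt, ENNReal.mul_rpow_of_nonneg _ _ (by linarith),
          ← ENNReal.rpow_mul]
        congr 3; ring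
    _ ≤ _ := by
        gcongr
        exact le_maxOp n 0 g hxc

/-- `M_α : L^p → L^q`, from Hedberg's inequality and the `(p,p)` bound, using `q (1 - a p) = p`. -/
theorem frac_strong_type (n : ℕ) (hn : 1 ≤ n) (p q a : ℝ) (hp : 1 < p) (ha : 0 < a)
    (hap : a * p < 1) (hq0 : 0 < q) (hq : q * (1 - a * p) = p) :
    ∃ D : ℝ≥0∞, D ≠ ⊤ ∧ ∀ g : EuclideanSpace ℝ (Fin n) → ℝ≥0∞, Measurable g →
      (∫⁻ x, maxOp n a g x ^ q) ^ (1 / q) ≤ D * (∫⁻ x, g x ^ p) ^ (1 / p) := by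
  obtain ⟨D, hD, h⟩ := strong_type n hn p hp
  have hq1 : 0 ≤ 1 / q := by positivity
  refine ⟨D ^ (1 / q), ENNReal.rpow_ne_top_of_nonneg hq1 hD, fun g hg => ?_⟩
  set J := ∫⁻ x, g x ^ p
  have h1 : ∫⁻ x, maxOp n a g x ^ q ≤ D * J * J ^ (a * q) := by
    calc ∫⁻ x, maxOp n a g x ^ q ≤ ∫⁻ x, maxOp n 0 g x ^ p * J ^ (a * q) := by
          refine lintegral_mono fun x => ?_
          have := ENNReal.rpow_le_rpow (hedberg n p a hp ha hap g hg x) hq0.le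
          rwa [ENNReal.mul_rpow_of_nonneg _ _ hq0.le, ← ENNReal.rpow_mul, ← ENNReal.rpow_mul,
            mul_comm (1 - a * p), hq] at this
      _ = (∫⁻ x, maxOp n 0 g x ^ p) * J ^ (a * q) :=
          lintegral_mul_const _ ((measurable_maxOp n 0 g).pow_const p)
      _ ≤ _ := by gcongr; exact h g hg
  refine (ENNReal.rpow_le_rpow h1 hq1).trans (le_of_eq ?_)
  rw [mul_assoc, ENNReal.mul_rpow_of_nonneg _ _ hq1]
  congr 1
  conv_lhs => enter [1, 1]; rw [← ENNReal.rpow_one J]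
  rw [← ENNReal.rpow_add_of_nonneg _ _ zero_le_one (by positivity), ← ENNReal.rpow_mul]
  congr 1
  field_simp
  linarith

/-! ### Local estimates and the Morrey condition -/

/-- For `z ∈ B(x,r)`, a ball through `z` either lies in `B(x,4r)`, or has radius `t > r` and lies in
`B(x,4t)`; the former are controlled by the maximal function of `g` cut off to `B(x,4r)`, the latter
by Hölder's inequality. -/
theorem maxOp_local (n : ℕ) (p q a : ℝ) (hp : 1 < p) (hq : 1 / q = 1 / p - a)
    (g : EuclideanSpace ℝ (Fin n) → ℝ≥0∞) (hg : Measurable g)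
    (x z : EuclideanSpace ℝ (Fin n)) (r : ℝ) (hz : z ∈ ball x r) (K : ℝ≥0∞)
    (hK : ∀ (c : EuclideanSpace ℝ (Fin n)) (t : ℝ), r < t →
      volume (ball c t) ^ (-(1 / q)) * (∫⁻ y in ball x (4 * t), g y ^ p) ^ (1 / p) ≤ K) :
    maxOp n a g z ≤ max (maxOp n a ((ball x (4 * r)).indicator g) z) K := by
  conv_lhs => rw [maxOp]
  refine iSup_le fun c => iSup_le fun t => iSup_le fun hzc => ?_
  have ht : 0 < t := pos_of_mem_ball hzc
  have hzx : dist z x < r := hz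
  have hzc' : dist z c < t := hzc
  rcases le_or_gt t r with htr | htr
  · refine le_max_of_le_left (le_trans (le_of_eq ?_) (le_maxOp n a _ hzc))
    congr 1
    refine setLIntegral_congr_fun measurableSet_ball fun y hy => ?_
    have hyc : dist y c < t := hy
    have : y ∈ ball x (4 * r) := by
      rw [mem_ball]
      have := dist_triangle4 y c z x
      rw [dist_comm c z] at this
      linarith
    simp [Set.indicator, this]
  · refine le_max_of_le_right (le_trans ?_ (hK c t htr))
    have hsub : ball c t ⊆ ball x (4 * t) := by
      intro y hy
      have hyc : dist y c < t := hy
      rw [mem_ball]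
      have := dist_triangle4 y c z x
      rw [dist_comm c z] at this
      linarith
    calc volume (ball c t) ^ (a - 1) * ∫⁻ y in ball c t, g y
        ≤ volume (ball c t) ^ (a - 1) *
          (volume (ball c t) ^ (1 - 1 / p) * (∫⁻ y in ball c t, g y ^ p) ^ (1 / p)) := by
          gcongr
          exact holder_ball n p hp g hg c t
      _ = volume (ball c t) ^ (-(1 / q)) * (∫⁻ y in ball c t, g y ^ p) ^ (1 / p) := by
          rw [← mul_assoc, ← ENNReal.rpow_add _ _ (volume_ball_ne_zero n c ht)
            (volume_ball_ne_top n c t), hq]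
          congr 2; ring
      _ ≤ _ := by
          have := lintegral_mono_set (μ := volume) (f := fun y => g y ^ p) hsub
          gcongr

/-- The only use of the condition relating `φ` and `ψ`. For `s > T` the Morrey norm `N` gives
`‖f‖_{L^p(B(x,T))} ≤ ‖f‖_{L^p(B(x,s))} ≤ N |B(0,1)|^{1/p} φ(x,s) s^{n/p}`, and one takes the essential
infimum over `s`. -/
theorem morrey_key (n : ℕ) (p q : ℝ) (hp : 1 < p)
    (φ ψ : EuclideanSpace ℝ (Fin n) → ℝ → ℝ)
    (hφpos : ∀ x r, 0 < r → 0 < φ x r) (C : ℝ)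
    (hcond : ∀ x r, 0 < r →
      (⨆ (t : ℝ) (_ : r < t),
        ENNReal.ofReal
          ((essInf (fun s => φ x s * s ^ ((n : ℝ) / p)) (volume.restrict (Set.Ioi t))) *
            t ^ (-((n : ℝ) / q)))) ≤
      ENNReal.ofReal (C * ψ x r))
    (f : EuclideanSpace ℝ (Fin n) → ℝ)
    (hf : ∀ x r, 0 < r → (∫⁻ y in ball x r, ENNReal.ofReal (|f y| ^ p)) < ⊤)
    (hN : morreyNorm p φ f < ⊤) (x : EuclideanSpace ℝ (Fin n)) (r T : ℝ) (hr : 0 < r)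
    (hT : r < T) :
    ENNReal.ofReal (T ^ (-((n : ℝ) / q))) *
      (∫⁻ y in ball x T, ENNReal.ofReal (|f y| ^ p)) ^ (1 / p) ≤
    volume (ball (0 : EuclideanSpace ℝ (Fin n)) 1) ^ (1 / p) * morreyNorm p φ f *
      ENNReal.ofReal (C * ψ x r) := by
  have hT0 : 0 < T := hr.trans hT
  have hp0 : 0 < p := by linarith
  have hp1 : 0 ≤ 1 / p := by positivity
  set v := volume (ball (0 : EuclideanSpace ℝ (Fin n)) 1) with hv
  set N := morreyNorm p φ f with hNdef
  set W := v ^ (1 / p) * N with hW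
  have hWt : W ≠ ⊤ := ENNReal.mul_ne_top
    (ENNReal.rpow_ne_top_of_nonneg hp1 (volume_ball_ne_top n 0 1)) hN.ne
  set J := (∫⁻ y in ball x T, ENNReal.ofReal (|f y| ^ p)) ^ (1 / p) with hJ
  have hJt : J ≠ ⊤ := ENNReal.rpow_ne_top_of_nonneg hp1 (hf x T hT0).ne
  have hJs : ∀ s, T < s → J ≤ W * ENNReal.ofReal (φ x s * s ^ ((n : ℝ) / p)) := by
    intro s hs
    have hs0 : 0 < s := hT0.trans hs
    set V := volume (ball x s) with hV
    have hV0 : V ≠ 0 := volume_ball_ne_zero n x hs0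
    have hVt : V ≠ ⊤ := volume_ball_ne_top n x s
    set I := ∫⁻ y in ball x s, ENNReal.ofReal (|f y| ^ p) with hI
    have h1 : ENNReal.ofReal ((φ x s)⁻¹) * (V⁻¹ * I) ^ (1 / p) ≤ N := by
      rw [hNdef, morreyNorm]
      exact le_iSup_of_le x (le_iSup_of_le s (le_iSup_of_le hs0 le_rfl))
    have hφ := hφpos x s hs0
    have hVp : V ^ (1 / p) = ENNReal.ofReal (s ^ ((n : ℝ) / p)) * v ^ (1 / p) := by
      rw [hV, volume_ball_eq n x hs0, ENNReal.mul_rpow_of_nonneg _ _ hp1,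
        ENNReal.ofReal_rpow_of_nonneg (by positivity) hp1, ← Real.rpow_natCast,
        ← Real.rpow_mul hs0.le, mul_one_div]
    have hφ1 : ENNReal.ofReal (φ x s) * ENNReal.ofReal ((φ x s)⁻¹) = 1 := by
      rw [← ENNReal.ofReal_mul hφ.le, mul_inv_cancel₀ hφ.ne', ENNReal.ofReal_one]
    calc J ≤ I ^ (1 / p) := by
          have := lintegral_mono_set (μ := volume) (f := fun y => ENNReal.ofReal (|f y| ^ p))
            (ball_subset_ball hs.le : ball x T ⊆ ball x s)
          rw [hJ]
          gcongr
      _ = (V * (V⁻¹ * I)) ^ (1 / p) := by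
          rw [← mul_assoc, ENNReal.mul_inv_cancel hV0 hVt, one_mul]
      _ = V ^ (1 / p) * ((ENNReal.ofReal (φ x s) * ENNReal.ofReal ((φ x s)⁻¹)) *
          (V⁻¹ * I) ^ (1 / p)) := by
          rw [ENNReal.mul_rpow_of_nonneg _ _ hp1, hφ1, one_mul]
      _ = V ^ (1 / p) * ENNReal.ofReal (φ x s) *
          (ENNReal.ofReal ((φ x s)⁻¹) * (V⁻¹ * I) ^ (1 / p)) := by ring
      _ ≤ V ^ (1 / p) * ENNReal.ofReal (φ x s) * N := by gcongr
      _ = _ := by rw [hVp, ENNReal.ofReal_mul hφ.le, hW]; ring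
  set e := essInf (fun s => φ x s * s ^ ((n : ℝ) / p)) (volume.restrict (Set.Ioi T)) with he
  have hJe : J ≤ W * ENNReal.ofReal e := by
    rcases eq_or_ne W 0 with hW0 | hW0
    · have := hJs (T + 1) (by linarith)
      simpa [hW0] using this
    have hne : (ae (volume.restrict (Set.Ioi T))).NeBot := by
      rw [ae_neBot, Ne, Measure.restrict_eq_zero]
      simp
    have hle : (J / W).toReal ≤ e := by
      refine Filter.le_liminf_of_le ?_ ?_
      · -- a real-valued function cannot exceed every natural number almost everywhere
        obtain ⟨k, hk⟩ : ∃ k : ℕ, ∃ᶠ s in ae (volume.restrict (Set.Ioi T)),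
            φ x s * s ^ ((n : ℝ) / p) ≤ k := by
          by_contra! hcon
          have hall := eventually_countable_forall.2 hcon
          obtain ⟨s, hs⟩ := hall.exists
          obtain ⟨k, hk⟩ := exists_nat_ge (φ x s * s ^ ((n : ℝ) / p))
          exact (hs k).not_ge hk
        exact Filter.IsCoboundedUnder.of_frequently_le hk
      · refine (ae_restrict_iff' measurableSet_Ioi).2 (Filter.Eventually.of_forall fun s hs => ?_)
        have hs' : T < s := hs
        have hs0 : 0 < s := hT0.trans hs'
        refine ENNReal.toReal_le_of_le_ofReal
          (mul_nonneg (hφpos x s hs0).le (by positivity)) ?_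
        refine ENNReal.div_le_of_le_mul ?_
        rw [mul_comm]
        exact hJs s hs'
    have : J / W ≤ ENNReal.ofReal e :=
      (ENNReal.le_ofReal_iff_toReal_le (ENNReal.div_ne_top hJt hW0)
        (ENNReal.toReal_nonneg.trans hle)).2 hle
    rw [mul_comm]
    exact (ENNReal.div_le_iff hW0 hWt).1 this
  have hc := (le_iSup_of_le T (le_iSup_of_le hT le_rfl)).trans (hcond x r hr)
  calc ENNReal.ofReal (T ^ (-((n : ℝ) / q))) * J
      ≤ ENNReal.ofReal (T ^ (-((n : ℝ) / q))) * (W * ENNReal.ofReal e) := by gcongr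
    _ = W * ENNReal.ofReal (e * T ^ (-((n : ℝ) / q))) := by
        rw [ENNReal.ofReal_mul' (by positivity)]; ring
    _ ≤ _ := by gcongr

theorem stmt11 (n : ℕ) (hn : 1 ≤ n) (α p q : ℝ)
    (hα : 0 < α ∧ α < (n : ℝ)) (hp : 1 < p ∧ p < (n : ℝ) / α)
    (hq : 1 / q = 1 / p - α / (n : ℝ))
    (φ ψ : EuclideanSpace ℝ (Fin n) → ℝ → ℝ)
    (hφm : Measurable (fun z : EuclideanSpace ℝ (Fin n) × ℝ => φ z.1 z.2))
    (hφpos : ∀ x r, 0 < r → 0 < φ x r)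
    (hψm : Measurable (fun z : EuclideanSpace ℝ (Fin n) × ℝ => ψ z.1 z.2))
    (hψpos : ∀ x r, 0 < r → 0 < ψ x r)
    (C : ℝ) (hC : 0 < C)
    (hcond : ∀ x r, 0 < r →
      (⨆ (t : ℝ) (_ : r < t),
        ENNReal.ofReal
          ((essInf (fun s => φ x s * s ^ ((n : ℝ) / p)) (volume.restrict (Set.Ioi t))) *
            t ^ (-((n : ℝ) / q)))) ≤
      ENNReal.ofReal (C * ψ x r)) :
    ∃ C' > (0 : ℝ), ∀ f : EuclideanSpace ℝ (Fin n) → ℝ, Measurable f →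
      (∀ x r, 0 < r → (∫⁻ y in ball x r, ENNReal.ofReal (|f y| ^ p)) < ⊤) →
      morreyNorm p φ f < ⊤ →
      morreyNormE q ψ (fracMax n α f) ≤ ENNReal.ofReal C' * morreyNorm p φ f := by
  obtain ⟨hα0, hαn⟩ := hα
  obtain ⟨hp1, hpn⟩ := hp
  have hn0 : (0 : ℝ) < n := by linarith
  have hp0 : 0 < p := by linarith
  set a := α / (n : ℝ) with ha
  have ha0 : 0 < a := by positivity
  have hap : a * p < 1 := by
    rw [lt_div_iff₀ hα0] at hpn
    rw [ha, div_mul_eq_mul_div, div_lt_one hn0]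
    linarith
  have hqinv : 1 / q = (1 - a * p) / p := by rw [hq]; field_simp
  have hq0 : 0 < q := by
    rw [← one_div_pos, hqinv]
    exact div_pos (by linarith) hp0
  have hqp : q * (1 - a * p) = p := by
    field_simp at hqinv
    linarith
  have hq1 : 1 ≤ q := by
    have : 0 < a * p := by positivity
    nlinarith
  have hq1' : 0 ≤ 1 / q := by positivity
  obtain ⟨D, hD, hfrac⟩ := frac_strong_type n hn p q a hp1 ha0 hap hq0 hqp
  set v := volume (ball (0 : EuclideanSpace ℝ (Fin n)) 1) with hv
  have hv0 : v ≠ 0 := volume_ball_ne_zero n 0 one_pos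
  have hvt : v ≠ ⊤ := volume_ball_ne_top n 0 1
  -- `|B(c,t)|^{-1/q} = A (4t)^{-n/q}`
  set A : ℝ≥0∞ := ENNReal.ofReal ((4⁻¹ : ℝ) ^ (-((n : ℝ) / q))) * v ^ (-(1 / q)) with hA
  have hAt : A ≠ ⊤ := ENNReal.mul_ne_top ENNReal.ofReal_ne_top
    (by simp [ENNReal.rpow_eq_top_iff, hv0, hvt])
  have hvol : ∀ (c : EuclideanSpace ℝ (Fin n)) (t : ℝ), 0 < t →
      volume (ball c t) ^ (-(1 / q)) = A * ENNReal.ofReal ((4 * t) ^ (-((n : ℝ) / q))) := by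
    intro c t ht
    rw [volume_ball_eq n c ht, ENNReal.mul_rpow_of_ne_top ENNReal.ofReal_ne_top hvt,
      ENNReal.ofReal_rpow_of_pos (by positivity), hA, mul_right_comm,
      ← ENNReal.ofReal_mul (by positivity), ← Real.mul_rpow (by positivity) (by positivity),
      inv_mul_cancel_left₀ (by norm_num), ← Real.rpow_natCast, ← Real.rpow_mul ht.le]
    congr 4; ring
  set B : ℝ≥0∞ := A * (v ^ (1 / p) * ENNReal.ofReal C) with hB
  have hBt : B ≠ ⊤ := ENNReal.mul_ne_top hAt (ENNReal.mul_ne_top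
    (ENNReal.rpow_ne_top_of_nonneg (by positivity) hvt) ENNReal.ofReal_ne_top)
  refine ⟨((D + 1) * B).toReal + 1, by positivity, fun f hf hfloc hN => ?_⟩
  have hconst : (D + 1) * B ≤ ENNReal.ofReal (((D + 1) * B).toReal + 1) := by
    rw [ENNReal.le_ofReal_iff_toReal_le (ENNReal.mul_ne_top (by simp [hD]) hBt) (by positivity)]
    linarith
  refine le_trans ?_ (mul_le_mul_left hconst _)
  set N := morreyNorm p φ f with hNdef
  set g : EuclideanSpace ℝ (Fin n) → ℝ≥0∞ := fun y => ENNReal.ofReal |f y| with hg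
  have hgm : Measurable g := by fun_prop
  have hgp : ∀ y, g y ^ p = ENNReal.ofReal (|f y| ^ p) := fun y =>
    ENNReal.ofReal_rpow_of_nonneg (abs_nonneg _) hp0.le
  have hfm : fracMax n α f = maxOp n a g := rfl
  rw [hfm, morreyNormE]
  refine iSup_le fun x => iSup_le fun r => iSup_le fun hr => ?_
  have hψ := hψpos x r hr
  have hkey : ∀ (c : EuclideanSpace ℝ (Fin n)) (t : ℝ), r ≤ t →
      volume (ball c t) ^ (-(1 / q)) * (∫⁻ y in ball x (4 * t), g y ^ p) ^ (1 / p) ≤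
        B * N * ENNReal.ofReal (ψ x r) := by
    intro c t ht
    have h := morrey_key n p q hp1 φ ψ hφpos C hcond f hfloc hN x r (4 * t) hr (by linarith)
    simp_rw [hgp]
    rw [hvol c t (by linarith), mul_assoc]
    calc _ ≤ A * _ := mul_le_mul_right h A
      _ = _ := by rw [ENNReal.ofReal_mul hC.le, hB]; ring
  set K := B * N * ENNReal.ofReal (ψ x r) with hK
  set g₁ := (ball x (4 * r)).indicator g with hg₁
  have hloc : ∀ z ∈ ball x r, maxOp n a g z ^ q ≤ maxOp n a g₁ z ^ q + K ^ q := by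
    intro z hz
    have h := maxOp_local n p q a hp1 hq g hgm x z r hz K (fun c t ht => hkey c t ht.le)
    rcases le_max_iff.1 h with h | h
    · exact le_add_right (ENNReal.rpow_le_rpow h hq0.le)
    · exact le_add_left (ENNReal.rpow_le_rpow h hq0.le)
  set V := volume (ball x r) with hV
  have hV0 : V ≠ 0 := volume_ball_ne_zero n x hr
  have hVt : V ≠ ⊤ := volume_ball_ne_top n x r
  have hg₁p : ∫⁻ y, g₁ y ^ p = ∫⁻ y in ball x (4 * r), g y ^ p := by
    rw [← lintegral_indicator measurableSet_ball]
    refine lintegral_congr fun y => ?_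
    by_cases hy : y ∈ ball x (4 * r)
    · simp only [hg₁, Set.indicator_of_mem hy]
    · simp only [hg₁, Set.indicator_of_notMem hy, ENNReal.zero_rpow_of_pos hp0]
  have hmain : (V⁻¹ * ∫⁻ z in ball x r, maxOp n a g z ^ q) ^ (1 / q) ≤ (D + 1) * K := by
    calc (V⁻¹ * ∫⁻ z in ball x r, maxOp n a g z ^ q) ^ (1 / q)
        ≤ (V⁻¹ * ∫⁻ z in ball x r, (maxOp n a g₁ z ^ q + K ^ q)) ^ (1 / q) := by
          have := setLIntegral_mono' (μ := volume) measurableSet_ball hloc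
          gcongr
      _ = (V⁻¹ * (∫⁻ z in ball x r, maxOp n a g₁ z ^ q) + K ^ q) ^ (1 / q) := by
          rw [lintegral_add_right _ measurable_const, setLIntegral_const, mul_add,
            mul_comm (K ^ q), ← mul_assoc V⁻¹ V, ENNReal.inv_mul_cancel hV0 hVt, one_mul]
      _ ≤ (V⁻¹ * (∫⁻ z in ball x r, maxOp n a g₁ z ^ q)) ^ (1 / q) + (K ^ q) ^ (1 / q) :=
          ENNReal.rpow_add_le_add_rpow _ _ hq1' (by rw [div_le_one hq0]; exact hq1)
      _ ≤ V ^ (-(1 / q)) * (D * (∫⁻ y in ball x (4 * r), g y ^ p) ^ (1 / p)) + K := by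
          gcongr
          · rw [ENNReal.mul_rpow_of_nonneg _ _ hq1', ENNReal.inv_rpow, ← ENNReal.rpow_neg,
              ← hg₁p]
            gcongr
            refine le_trans ?_ (hfrac g₁ (hgm.indicator measurableSet_ball))
            have := setLIntegral_le_lintegral (μ := volume) (ball x r)
              (fun z => maxOp n a g₁ z ^ q)
            gcongr
          · rw [← ENNReal.rpow_mul, mul_one_div, div_self hq0.ne', ENNReal.rpow_one]
      _ ≤ D * K + K := by
          rw [mul_left_comm]
          gcongr
          exact hkey x r le_rfl
      _ = _ := by ring
  calc ENNReal.ofReal ((ψ x r)⁻¹) * (V⁻¹ * ∫⁻ z in ball x r, maxOp n a g z ^ q) ^ (1 / q)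
      ≤ ENNReal.ofReal ((ψ x r)⁻¹) * ((D + 1) * K) := by gcongr
    _ = (D + 1) * B * N * (ENNReal.ofReal ((ψ x r)⁻¹) * ENNReal.ofReal (ψ x r)) := by
        rw [hK]; ring
    _ = (D + 1) * B * N := by
        rw [← ENNReal.ofReal_mul (by positivity), inv_mul_cancel₀ hψ.ne', ENNReal.ofReal_one,
          mul_one]
end

section
/- Let n ≥ 1 and m ≥ 1 be integers, let 1 < p_i < ∞ for i = 1,…,m, and define q by 1/q = 1/p_1 + ⋯ + 1/p_m, assuming 1/q < 1. Let φ_1,…,φ_m, ψ be positive measurable functions on ℝ^n × (0,∞) such that there is a constant C > 0, independent of x ∈ ℝ^n and r > 0, with ∏_{i=1}^m sup_{r<t<∞} (essinf_{t<s<∞} φ_i(x,s) s^{n/p_i}) t^{−n/p_i} ≤ C ψ(x,r). Then there exists a constant C' > 0 such that for all f_i ∈ 𝓛^{p_i,φ_i}(ℝ^n), i = 1,…,m, one has ‖M_{0,m}(f_1,…,f_m)‖_{𝓛^{q,ψ}(ℝ^n)} ≤ C' ∏_{i=1}^m ‖f_i‖_{𝓛^{p_i,φ_i}(ℝ^n)},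 where M_{0,m}(f_1,…,f_m)(x) = sup_{B ∋ x} ∏_{i=1}^m |B|^{-1} ∫_B |f_i(y_i)| dy_i (supremum over open Euclidean balls B containing x). -/
/-!
Fix a ball `B(x,r)`. A ball of radius `t` meeting it at `y` lies in `B(x,3r)` if `t ≤ r` and in
`B(x,3t)` if `t > r`. Hence on `B(x,r)` the multilinear maximal function is at most the maximum of
`∏ᵢ M(fᵢ 1_{B(x,3r)})`, with `M` the Hardy–Littlewood maximal function over balls of radius `≤ r`,
and a multiple of `∏ᵢ sup_{t>r} (|B(x,t)|⁻¹ ∫_{B(x,t)} |fᵢ|^{pᵢ})^{1/pᵢ}` (`multMFrac_le`); no mixed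
terms occur. Hölder's inequality with exponents `pᵢ/q` and the boundedness of `M` on `L^{pᵢ}`
(`strong_locMax`, proved from the Vitali covering lemma by Marcinkiewicz interpolation) bound the
normalized `L^q` norm of the first product by the same product of suprema (`local_estimate`).

Since `∫_{B(x,t)} |fᵢ|^{pᵢ}` increases with `t`, each normalized norm at radius `t` is at most
`‖fᵢ‖ t^{-n/pᵢ} essinf_{s>t} φᵢ(x,s) s^{n/pᵢ}` (`avgN_le_essInf`), and the hypothesis on `φᵢ` and `ψ`
then concludes. All products are taken in `[0,∞]`, where multiplication is monotone with `0 * ∞ = 0`,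
so infinite suprema need no separate treatment.
-/

open MeasureTheory Metric ENNReal

/-- The multilinear (fractional) maximal operator `M_{α,m}` on `ℝⁿ`;
for `α = 0` this is `M_{0,m} f (x) = sup_{B ∋ x} ∏ᵢ |B|⁻¹ ∫_B |fᵢ|`. -/
noncomputable def multMFrac (n m : ℕ) (α : ℝ)
    (f : Fin m → EuclideanSpace ℝ (Fin n) → ℝ) (x : EuclideanSpace ℝ (Fin n)) : ℝ≥0∞ :=
  ⨆ (c : EuclideanSpace ℝ (Fin n)) (t : ℝ) (_ : x ∈ ball c t),
    volume (ball c t) ^ (α / (n : ℝ)) *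
      ∏ i, (volume (ball c t))⁻¹ * ∫⁻ y in ball c t, ENNReal.ofReal |f i y|

/-! ### The Hardy–Littlewood maximal function over balls of bounded radius -/

/-- The uncentred Hardy–Littlewood maximal function of `g ≥ 0`, restricted to balls of radius at
most `R`. The bound on the radii is what the Vitali covering lemma asks for. -/
noncomputable def locMax {n : ℕ} (R : ℝ) (g : EuclideanSpace ℝ (Fin n) → ℝ≥0∞)
    (y : EuclideanSpace ℝ (Fin n)) : ℝ≥0∞ :=
  ⨆ (c : EuclideanSpace ℝ (Fin n)) (t : ℝ) (_ : t ≤ R) (_ : y ∈ ball c t),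
    (volume (ball c t))⁻¹ * ∫⁻ z in ball c t, g z

lemma le_locMax {n : ℕ} {R : ℝ} {g : EuclideanSpace ℝ (Fin n) → ℝ≥0∞}
    {y c : EuclideanSpace ℝ (Fin n)} {t : ℝ} (ht : t ≤ R) (hy : y ∈ ball c t) :
    (volume (ball c t))⁻¹ * ∫⁻ z in ball c t, g z ≤ locMax R g y := by
  unfold locMax
  exact le_iSup_of_le c (le_iSup_of_le t (le_iSup_of_le ht (le_iSup_of_le hy le_rfl)))

lemma measurable_locMax {n : ℕ} (R : ℝ) (g : EuclideanSpace ℝ (Fin n) → ℝ≥0∞) :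
    Measurable (locMax R g) := by
  apply LowerSemicontinuous.measurable
  unfold locMax
  refine lowerSemicontinuous_iSup fun c => lowerSemicontinuous_iSup fun t =>
    lowerSemicontinuous_iSup fun _ => ?_
  have h : (fun y => ⨆ (_ : y ∈ ball c t), (volume (ball c t))⁻¹ * ∫⁻ z in ball c t, g z) =
      (ball c t).indicator (fun _ => (volume (ball c t))⁻¹ * ∫⁻ z in ball c t, g z) := by
    funext y
    by_cases hy : y ∈ ball c t <;> simp [hy]
  rw [h]
  exact isOpen_ball.lowerSemicontinuous_indicator (zero_le)

lemma volume_ball_mul {n : ℕ} (x y : EuclideanSpace ℝ (Fin n)) {t k : ℝ} (ht : 0 < t)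
    (hk : 0 < k) :
    volume (ball x (k * t)) = ENNReal.ofReal (k ^ n) * volume (ball y t) := by
  rw [Measure.addHaar_ball_of_pos _ _ (mul_pos hk ht), Measure.addHaar_ball_of_pos _ y ht,
    finrank_euclideanSpace_fin, mul_pow, ENNReal.ofReal_mul (by positivity), mul_assoc]

/-- Weak type `(1,1)`, by the Vitali covering lemma. -/
lemma weak_locMax {n : ℕ} (R : ℝ) (g : EuclideanSpace ℝ (Fin n) → ℝ≥0∞) (a : ℝ≥0∞) :
    a * volume {y | a < locMax R g y} ≤ ENNReal.ofReal (5 ^ n) * ∫⁻ z, g z := by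
  set T : Set (EuclideanSpace ℝ (Fin n) × ℝ) :=
    {b | 0 < b.2 ∧ b.2 ≤ R ∧ a * volume (ball b.1 b.2) ≤ ∫⁻ z in ball b.1 b.2, g z} with hT
  obtain ⟨u, huT, hdisj, hcov⟩ :=
    Vitali.exists_disjoint_subfamily_covering_enlargement_closedBall T (fun b => b.1)
      (fun b => b.2) R (fun b hb => hb.2.1) 5 (by norm_num)
  have hcount : u.Countable := by
    refine hdisj.countable_of_nonempty_interior fun b hb => ⟨b.1, ?_⟩
    exact ball_subset_interior_closedBall (mem_ball_self (huT hb).1)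
  have hsub : {y | a < locMax R g y} ⊆ ⋃ b ∈ u, closedBall b.1 (5 * b.2) := by
    intro y hy
    simp only [Set.mem_ofPred_eq, locMax, lt_iSup_iff] at hy
    obtain ⟨c, t, htR, hyt, hlt⟩ := hy
    have ht : 0 < t := pos_of_mem_ball hyt
    have hmem : ((c, t) : EuclideanSpace ℝ (Fin n) × ℝ) ∈ T := by
      refine ⟨ht, htR, ?_⟩
      calc a * volume (ball c t)
          ≤ (volume (ball c t))⁻¹ * (∫⁻ z in ball c t, g z) * volume (ball c t) := by gcongr
        _ = (volume (ball c t))⁻¹ * volume (ball c t) * (∫⁻ z in ball c t, g z) := by ring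
        _ = _ := by
          rw [ENNReal.inv_mul_cancel (measure_ball_pos _ _ ht).ne' measure_ball_lt_top.ne, one_mul]
    obtain ⟨b, hb, hsb⟩ := hcov _ hmem
    exact Set.mem_biUnion hb (hsb (ball_subset_closedBall hyt))
  have hvol : ∀ b ∈ u, a * volume (closedBall b.1 (5 * b.2)) ≤
      ENNReal.ofReal (5 ^ n) * ∫⁻ z in ball b.1 b.2, g z := by
    intro b hb
    obtain ⟨h0, -, h⟩ := huT hb
    rw [Measure.addHaar_closedBall _ _ (by positivity),
      ← Measure.addHaar_ball_of_pos _ b.1 (by positivity),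
      volume_ball_mul b.1 b.1 h0 (by norm_num), mul_left_comm]
    gcongr
  calc a * volume {y | a < locMax R g y}
      ≤ a * ∑' b : u, volume (closedBall b.1.1 (5 * b.1.2)) := by
        gcongr
        exact (measure_mono hsub).trans (measure_biUnion_le _ hcount _)
    _ = ∑' b : u, a * volume (closedBall b.1.1 (5 * b.1.2)) := ENNReal.tsum_mul_left.symm
    _ ≤ ∑' b : u, ENNReal.ofReal (5 ^ n) * ∫⁻ z in ball b.1.1 b.1.2, g z :=
        ENNReal.tsum_le_tsum fun b => hvol b.1 b.2
    _ = ENNReal.ofReal (5 ^ n) * ∫⁻ z in ⋃ b ∈ u, ball b.1 b.2, g z := by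
        rw [ENNReal.tsum_mul_left, lintegral_biUnion hcount (fun _ _ => measurableSet_ball)]
        exact hdisj.mono fun b => ball_subset_closedBall
    _ ≤ _ := by
        gcongr
        exact Measure.restrict_le_self

/-- Only the part of `g` above `a / 2` matters for the level set of the maximal function at
height `a`; this is the truncation in Marcinkiewicz interpolation. -/
lemma weak_locMax_trunc {n : ℕ} (R : ℝ) {g : EuclideanSpace ℝ (Fin n) → ℝ≥0∞}
    (a : ℝ≥0∞) :
    a * volume {y | a < locMax R g y} ≤
      ENNReal.ofReal (2 * 5 ^ n) * ∫⁻ z, {z | a < 2 * g z}.indicator g z := by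
  set h : EuclideanSpace ℝ (Fin n) → ℝ≥0∞ := {z | a < 2 * g z}.indicator g with hh
  have hgh : ∀ z, g z ≤ h z + a / 2 := by
    intro z
    by_cases hz : a < 2 * g z
    · simp [hh, hz]
    · have : g z ≤ a / 2 := by
        rw [ENNReal.le_div_iff_mul_le (by simp) (by simp), mul_comm]
        exact not_lt.1 hz
      exact this.trans le_add_self
  have hM : ∀ y, locMax R g y ≤ locMax R h y + a / 2 := by
    intro y
    refine iSup_le fun c => iSup_le fun t => iSup_le fun ht => iSup_le fun hy => ?_
    have ht0 : 0 < t := pos_of_mem_ball hy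
    calc (volume (ball c t))⁻¹ * ∫⁻ z in ball c t, g z
        ≤ (volume (ball c t))⁻¹ * ∫⁻ z in ball c t, (h z + a / 2) := by
          gcongr with z
          exact hgh z
      _ = (volume (ball c t))⁻¹ * (∫⁻ z in ball c t, h z) + a / 2 := by
          rw [lintegral_add_right _ measurable_const, setLIntegral_const, mul_add,
            mul_comm (a / 2), ← mul_assoc _ _ (a / 2),
            ENNReal.inv_mul_cancel (measure_ball_pos _ _ ht0).ne' measure_ball_lt_top.ne, one_mul]
      _ ≤ _ := by
          gcongr
          exact le_locMax ht hy
  have hsub : {y | a < locMax R g y} ⊆ {y | a / 2 < locMax R h y} := by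
    intro y hy
    simp only [Set.mem_ofPred_eq] at hy ⊢
    by_contra! hcon
    have := (hM y).trans (add_le_add_left hcon (a / 2))
    rw [ENNReal.add_halves] at this
    exact absurd hy (not_lt.2 this)
  calc a * volume {y | a < locMax R g y}
      ≤ a * volume {y | a / 2 < locMax R h y} := by gcongr
    _ = 2 * (a / 2 * volume {y | a / 2 < locMax R h y}) := by
        rw [← mul_assoc, ENNReal.mul_div_cancel (by simp) (by simp)]
    _ ≤ 2 * (ENNReal.ofReal (5 ^ n) * ∫⁻ z, h z) := by
        gcongr 2 * ?_
        exact weak_locMax R h _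
    _ = _ := by
        rw [ENNReal.ofReal_mul (by norm_num), ← mul_assoc]
        norm_num

lemma lintegral_rpow_Ioc {s b : ℝ} (hs : 0 < s) (hb : 0 ≤ b) :
    ∫⁻ l in Set.Ioc 0 b, ENNReal.ofReal (l ^ (s - 1)) = ENNReal.ofReal (b ^ s / s) := by
  have hi : IntervalIntegrable (fun l : ℝ => l ^ (s - 1)) volume 0 b :=
    intervalIntegral.intervalIntegrable_rpow' (by linarith)
  rw [← ofReal_integral_eq_lintegral_ofReal]
  · rw [← intervalIntegral.integral_of_le hb, integral_rpow (Or.inl (by linarith))]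
    simp [Real.zero_rpow hs.ne']
  · exact (intervalIntegrable_iff_integrableOn_Ioc_of_le hb).1 hi
  · refine (ae_restrict_iff' measurableSet_Ioc).2 (Filter.Eventually.of_forall fun l hl => ?_)
    exact Real.rpow_nonneg hl.1.le _

/-- Layer-cake bound for `a ^ s`, valid also for `a = ∞`. -/
lemma rpow_le_layer {s : ℝ} (hs : 0 < s) (a : ℝ≥0∞) :
    a ^ s ≤ ENNReal.ofReal s *
      ∫⁻ l in Set.Ioi (0 : ℝ),
        {l : ℝ | ENNReal.ofReal l < a}.indicator (fun l => ENNReal.ofReal (l ^ (s - 1))) l := by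
  rw [← ENNReal.le_rpow_inv_iff hs]
  refine ENNReal.le_of_forall_nnreal_lt fun b hb => ?_
  rw [ENNReal.le_rpow_inv_iff hs]
  have hm : MeasurableSet {l : ℝ | ENNReal.ofReal l < a} :=
    measurableSet_lt ENNReal.measurable_ofReal measurable_const
  rw [lintegral_indicator hm, Measure.restrict_restrict hm]
  calc (b : ℝ≥0∞) ^ s = ENNReal.ofReal s * ENNReal.ofReal ((b : ℝ) ^ s / s) := by
        rw [← ENNReal.ofReal_mul hs.le, mul_div_cancel₀ _ hs.ne',
          ← ENNReal.ofReal_rpow_of_nonneg b.coe_nonneg hs.le, ENNReal.ofReal_coe_nnreal]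
    _ = ENNReal.ofReal s * ∫⁻ l in Set.Ioc 0 (b : ℝ), ENNReal.ofReal (l ^ (s - 1)) := by
        rw [lintegral_rpow_Ioc hs b.coe_nonneg]
    _ ≤ _ := by
        gcongr
        intro l hl
        refine ⟨lt_of_le_of_lt ?_ hb, hl.1⟩
        rw [← ENNReal.ofReal_coe_nnreal]
        exact ENNReal.ofReal_le_ofReal hl.2

lemma layer_le_rpow {s : ℝ} (hs : 0 < s) {a : ℝ≥0∞} (ha : a ≠ ⊤) :
    ∫⁻ l in Set.Ioi (0 : ℝ),
      {l : ℝ | ENNReal.ofReal l < a}.indicator (fun l => ENNReal.ofReal (l ^ (s - 1))) l ≤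
    ENNReal.ofReal (1 / s) * a ^ s := by
  have hm : MeasurableSet {l : ℝ | ENNReal.ofReal l < a} :=
    measurableSet_lt ENNReal.measurable_ofReal measurable_const
  rw [lintegral_indicator hm, Measure.restrict_restrict hm]
  calc _ ≤ ∫⁻ l in Set.Ioc 0 a.toReal, ENNReal.ofReal (l ^ (s - 1)) := by
        apply lintegral_mono_set
        intro l hl
        refine ⟨hl.2, ?_⟩
        exact (ENNReal.ofReal_le_iff_le_toReal ha).1 (le_of_lt hl.1)
    _ = _ := by
        rw [lintegral_rpow_Ioc hs ENNReal.toReal_nonneg, div_eq_mul_one_div, mul_comm,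
          ENNReal.ofReal_mul (by positivity),
          ← ENNReal.ofReal_rpow_of_nonneg ENNReal.toReal_nonneg hs.le, ENNReal.ofReal_toReal ha]

/-- Strong type `(p,p)` for `p > 1`: Marcinkiewicz interpolation between the weak `(1,1)` bound and
the trivial `L^∞` bound. -/
lemma strong_locMax (n : ℕ) {p : ℝ} (hp : 1 < p) :
    ∃ K : ℝ≥0∞, K ≠ ⊤ ∧ ∀ (R : ℝ) (g : EuclideanSpace ℝ (Fin n) → ℝ≥0∞), Measurable g →
      (∀ y, g y ≠ ⊤) → ∫⁻ y, (locMax R g y) ^ p ≤ K * ∫⁻ y, (g y) ^ p := by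
  refine ⟨ENNReal.ofReal p * (ENNReal.ofReal (2 * 5 ^ n) *
    (ENNReal.ofReal (1 / (p - 1)) * 2 ^ (p - 1))), ?_, fun R g hg hgt => ?_⟩
  · refine ENNReal.mul_ne_top ENNReal.ofReal_ne_top
      (ENNReal.mul_ne_top ENNReal.ofReal_ne_top (ENNReal.mul_ne_top ENNReal.ofReal_ne_top (ENNReal.rpow_ne_top_of_nonneg (by linarith) (by simp))))
  have hp0 : 0 < p := by linarith
  have hmeasM := measurable_locMax R g
  calc ∫⁻ y, (locMax R g y) ^ p
      ≤ ∫⁻ y, ENNReal.ofReal p * ∫⁻ l in Set.Ioi (0 : ℝ),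
          {l : ℝ | ENNReal.ofReal l < locMax R g y}.indicator
            (fun l => ENNReal.ofReal (l ^ (p - 1))) l :=
        lintegral_mono fun y => rpow_le_layer hp0 _
    _ = ENNReal.ofReal p * ∫⁻ l in Set.Ioi (0 : ℝ), ∫⁻ y,
          {l : ℝ | ENNReal.ofReal l < locMax R g y}.indicator
            (fun l => ENNReal.ofReal (l ^ (p - 1))) l := by
        rw [lintegral_const_mul' _ _ ENNReal.ofReal_ne_top, lintegral_lintegral_swap]
        refine Measurable.aemeasurable ?_
        have : MeasurableSet {z : EuclideanSpace ℝ (Fin n) × ℝ |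
            ENNReal.ofReal z.2 < locMax R g z.1} :=
          measurableSet_lt (by fun_prop) (hmeasM.comp measurable_fst)
        exact Measurable.indicator (f := fun z : EuclideanSpace ℝ (Fin n) × ℝ =>
          ENNReal.ofReal (z.2 ^ (p - 1))) (by fun_prop) this
    _ ≤ ENNReal.ofReal p * ∫⁻ l in Set.Ioi (0 : ℝ), ENNReal.ofReal (2 * 5 ^ n) * ∫⁻ y,
          g y * {l : ℝ | ENNReal.ofReal l < 2 * g y}.indicator
            (fun l => ENNReal.ofReal (l ^ (p - 1 - 1))) l := by
        refine mul_le_mul_right ?_ _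
        refine setLIntegral_mono' measurableSet_Ioi fun l hl => ?_
        have hl0 : (0 : ℝ) < l := hl
        have e1 : ∫⁻ y, {l : ℝ | ENNReal.ofReal l < locMax R g y}.indicator
            (fun l => ENNReal.ofReal (l ^ (p - 1))) l =
            ENNReal.ofReal (l ^ (p - 1 - 1)) *
              (ENNReal.ofReal l * volume {y | ENNReal.ofReal l < locMax R g y}) := by
          rw [← mul_assoc, ← ENNReal.ofReal_mul (by positivity), ← Real.rpow_add_one hl0.ne',
            sub_add_cancel, ← lintegral_indicator_const (measurableSet_lt measurable_const hmeasM)]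
          rfl
        have e2 : ∫⁻ y, g y * {l : ℝ | ENNReal.ofReal l < 2 * g y}.indicator
            (fun l => ENNReal.ofReal (l ^ (p - 1 - 1))) l =
            ENNReal.ofReal (l ^ (p - 1 - 1)) *
              ∫⁻ z, {z | ENNReal.ofReal l < 2 * g z}.indicator g z := by
          rw [← lintegral_const_mul' _ _ ENNReal.ofReal_ne_top]
          refine lintegral_congr fun z => ?_
          by_cases hz : ENNReal.ofReal l < 2 * g z <;> simp [Set.indicator, mul_comm]
        rw [e1, e2, mul_left_comm (ENNReal.ofReal (2 * 5 ^ n))]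
        refine mul_le_mul_right ?_ _
        exact weak_locMax_trunc R _
    _ = ENNReal.ofReal p * (ENNReal.ofReal (2 * 5 ^ n) * ∫⁻ y, g y * ∫⁻ l in Set.Ioi (0 : ℝ),
          {l : ℝ | ENNReal.ofReal l < 2 * g y}.indicator
            (fun l => ENNReal.ofReal (l ^ (p - 1 - 1))) l) := by
        rw [lintegral_const_mul' _ _ ENNReal.ofReal_ne_top, lintegral_lintegral_swap]
        · congr 2
          exact lintegral_congr fun y => lintegral_const_mul' _ _ (hgt y)
        · refine Measurable.aemeasurable ?_
          have : MeasurableSet {z : ℝ × EuclideanSpace ℝ (Fin n) |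
              ENNReal.ofReal z.1 < 2 * g z.2} :=
            measurableSet_lt (by fun_prop) (by fun_prop)
          exact Measurable.mul (by fun_prop) (Measurable.indicator
            (f := fun z : ℝ × EuclideanSpace ℝ (Fin n) =>
              ENNReal.ofReal (z.1 ^ (p - 1 - 1))) (by fun_prop) this)
    _ ≤ ENNReal.ofReal p * (ENNReal.ofReal (2 * 5 ^ n) * ∫⁻ y,
          (ENNReal.ofReal (1 / (p - 1)) * 2 ^ (p - 1)) * (g y) ^ p) := by
        refine mul_le_mul_right (mul_le_mul_right (lintegral_mono fun y => ?_) _) _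
        calc _ ≤ g y * (ENNReal.ofReal (1 / (p - 1)) * (2 * g y) ^ (p - 1)) := by
              gcongr
              exact layer_le_rpow (by linarith) (ENNReal.mul_ne_top (by simp) (hgt y))
          _ = (ENNReal.ofReal (1 / (p - 1)) * 2 ^ (p - 1)) *
                ((g y) ^ (1 : ℝ) * (g y) ^ (p - 1)) := by
              rw [ENNReal.mul_rpow_of_nonneg _ _ (by linarith), ENNReal.rpow_one]
              ring
          _ = _ := by
              rw [← ENNReal.rpow_add_of_nonneg _ _ (by norm_num) (by linarith)]
              congr 2
              ring
    _ = _ := by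
        rw [lintegral_const_mul' _ _ (ENNReal.mul_ne_top (by simp)
          (ENNReal.rpow_ne_top_of_nonneg (by linarith) (by simp)))]
        simp only [mul_assoc]

/-! ### Normalized local norms and the Morrey norm -/

/-- The normalized local `L^p` norm `(|B(x,t)|⁻¹ ∫_{B(x,t)} |f|^p)^{1/p}`. -/
noncomputable def avgN {n : ℕ} (p : ℝ) (f : EuclideanSpace ℝ (Fin n) → ℝ)
    (x : EuclideanSpace ℝ (Fin n)) (t : ℝ) : ℝ≥0∞ :=
  ((volume (ball x t))⁻¹ * ∫⁻ y in ball x t, ENNReal.ofReal (|f y| ^ p)) ^ (1 / p)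

lemma avgN_le_morreyNorm {n : ℕ} {p : ℝ} {φ : EuclideanSpace ℝ (Fin n) → ℝ → ℝ}
    {f : EuclideanSpace ℝ (Fin n) → ℝ} {x : EuclideanSpace ℝ (Fin n)} {t : ℝ} (ht : 0 < t)
    (hφ : 0 < φ x t) :
    avgN p f x t ≤ ENNReal.ofReal (φ x t) * morreyNorm p φ f := by
  have h : ENNReal.ofReal ((φ x t)⁻¹) * avgN p f x t ≤ morreyNorm p φ f :=
    le_iSup_of_le x (le_iSup_of_le t (le_iSup_of_le ht le_rfl))
  calc avgN p f x t = ENNReal.ofReal (φ x t) * (ENNReal.ofReal ((φ x t)⁻¹) * avgN p f x t) := by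
        rw [← mul_assoc, ← ENNReal.ofReal_mul hφ.le, mul_inv_cancel₀ hφ.ne', ENNReal.ofReal_one,
          one_mul]
    _ ≤ _ := by gcongr

lemma inv_volume_ball {n : ℕ} (c x : EuclideanSpace ℝ (Fin n)) {t k : ℝ} (ht : 0 < t)
    (hk : 0 < k) :
    (volume (ball c t))⁻¹ = ENNReal.ofReal (k ^ n) * (volume (ball x (k * t)))⁻¹ := by
  have hkn : ENNReal.ofReal (k ^ n) ≠ 0 := by simpa using pow_pos hk n
  rw [volume_ball_mul x c ht hk, ENNReal.mul_inv (Or.inl hkn) (Or.inl ENNReal.ofReal_ne_top),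
    ← mul_assoc, ENNReal.mul_inv_cancel hkn ENNReal.ofReal_ne_top, one_mul]

lemma avgN_mono {n : ℕ} {p : ℝ} (hp : 0 < p) {f : EuclideanSpace ℝ (Fin n) → ℝ}
    {c x : EuclideanSpace ℝ (Fin n)} {t k : ℝ} (ht : 0 < t) (hk : 0 < k)
    (hsub : ball c t ⊆ ball x (k * t)) :
    avgN p f c t ≤ ENNReal.ofReal (k ^ ((n : ℝ) / p)) * avgN p f x (k * t) := by
  have h1 : ENNReal.ofReal (k ^ ((n : ℝ) / p)) = ENNReal.ofReal (k ^ n) ^ (1 / p) := by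
    rw [ENNReal.ofReal_rpow_of_nonneg (by positivity) (by positivity), ← Real.rpow_natCast,
      ← Real.rpow_mul hk.le, mul_one_div]
  unfold avgN
  rw [h1, ← ENNReal.mul_rpow_of_nonneg _ _ (by positivity), ← mul_assoc,
    ← inv_volume_ball c x ht hk]
  gcongr

lemma average_le_avgN {n : ℕ} {p : ℝ} (hp : 1 < p) {f : EuclideanSpace ℝ (Fin n) → ℝ}
    (hf : Measurable f) (c : EuclideanSpace ℝ (Fin n)) {t : ℝ} (ht : 0 < t) :
    (volume (ball c t))⁻¹ * ∫⁻ y in ball c t, ENNReal.ofReal |f y| ≤ avgN p f c t := by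
  set μ : Measure (EuclideanSpace ℝ (Fin n)) :=
    (volume (ball c t))⁻¹ • volume.restrict (ball c t) with hμ
  have : IsProbabilityMeasure μ := ⟨by
    simp [hμ, ENNReal.inv_mul_cancel (measure_ball_pos _ c ht).ne' measure_ball_lt_top.ne]⟩
  have h := eLpNorm'_le_eLpNorm'_of_exponent_le (f := f) one_pos hp.le μ
    hf.aestronglyMeasurable
  have hp0 : 0 ≤ p := by linarith
  simp only [eLpNorm', ENNReal.rpow_one, div_one, hμ, lintegral_smul_measure, smul_eq_mul,
    Real.enorm_eq_ofReal_abs] at h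
  simpa only [avgN, ENNReal.ofReal_rpow_of_nonneg (abs_nonneg _) hp0] using h

/-- A real function has a genuine essential infimum with respect to a nonzero measure: the
lower bounds holding almost everywhere are bounded above. -/
lemma le_essInf_real {α : Type*} [MeasurableSpace α] {μ : Measure α} (hμ : μ ≠ 0) {u : α → ℝ}
    {a : ℝ} (h : ∀ᵐ s ∂μ, a ≤ u s) : a ≤ essInf u μ := by
  refine Filter.le_liminf_of_le ?_ h
  have : ∃ b : ℝ, ∃ᶠ s in ae μ, u s ≤ b := by
    by_contra! hcon
    have h2 : ∀ᵐ s ∂μ, ∀ k : ℕ, ¬ u s ≤ k := ae_all_iff.2 fun k => by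
      simpa [Filter.Frequently] using hcon k
    have : (ae μ).NeBot := ae_neBot.2 hμ
    obtain ⟨s, hs⟩ := h2.exists
    obtain ⟨k, hk⟩ := exists_nat_ge (u s)
    exact hs k hk
  obtain ⟨b, hb⟩ := this
  exact Filter.IsCoboundedUnder.of_frequently_le hb

/-- The Morrey bound at radius `t` improves to one by the essential infimum over larger radii,
because `∫_{B(x,t)} |f|^p` increases with `t`. -/
lemma avgN_le_essInf {n : ℕ} {p : ℝ} (hp : 0 < p) {φ : EuclideanSpace ℝ (Fin n) → ℝ → ℝ}
    {f : EuclideanSpace ℝ (Fin n) → ℝ} {x : EuclideanSpace ℝ (Fin n)} {t : ℝ} (ht : 0 < t)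
    (hφ : ∀ r, 0 < r → 0 < φ x r) (hfin : morreyNorm p φ f < ⊤) :
    avgN p f x t ≤ morreyNorm p φ f * ENNReal.ofReal
      ((essInf (fun s => φ x s * s ^ ((n : ℝ) / p)) (volume.restrict (Set.Ioi t))) *
        t ^ (-((n : ℝ) / p))) := by
  have hle := avgN_le_morreyNorm (p := p) (f := f) ht (hφ t ht)
  rcases eq_or_ne (morreyNorm p φ f) 0 with h0 | h0
  · rw [h0, mul_zero] at hle
    exact hle.trans zero_le
  have hNfin : avgN p f x t ≠ ⊤ :=
    (hle.trans_lt (ENNReal.mul_lt_top ENNReal.ofReal_lt_top hfin)).ne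
  set b := (morreyNorm p φ f).toReal with hb
  set a := (avgN p f x t).toReal with ha
  have hb0 : 0 < b := ENNReal.toReal_pos h0 hfin.ne
  have hbe : morreyNorm p φ f = ENNReal.ofReal b := (ENNReal.ofReal_toReal hfin.ne).symm
  have hae : avgN p f x t = ENNReal.ofReal a := (ENNReal.ofReal_toReal hNfin).symm
  have htp : 0 < t ^ ((n : ℝ) / p) := Real.rpow_pos_of_pos ht _
  have key : a / b * t ^ ((n : ℝ) / p) ≤
      essInf (fun s => φ x s * s ^ ((n : ℝ) / p)) (volume.restrict (Set.Ioi t)) := by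
    refine le_essInf_real (by simp [Measure.restrict_eq_zero]) ?_
    refine (ae_restrict_iff' measurableSet_Ioi).2 (Filter.Eventually.of_forall fun s hs => ?_)
    have hs' : t < s := hs
    have hs0 : 0 < s := ht.trans hs'
    have hst : s / t * t = s := div_mul_cancel₀ _ ht.ne'
    have h1 := avgN_mono hp (f := f) (c := x) (x := x) ht (div_pos hs0 ht)
      (by rw [hst]; exact ball_subset_ball hs'.le)
    rw [hst] at h1
    have h2 := h1.trans (mul_le_mul_right (avgN_le_morreyNorm hs0 (hφ s hs0)) _)
    have hφs := hφ s hs0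
    rw [hae, hbe, ← ENNReal.ofReal_mul hφs.le, ← ENNReal.ofReal_mul (by positivity),
      ENNReal.ofReal_le_ofReal_iff (by positivity), Real.div_rpow hs0.le ht.le] at h2
    calc a / b * t ^ ((n : ℝ) / p)
        ≤ (s ^ ((n : ℝ) / p) / t ^ ((n : ℝ) / p) * (φ x s * b)) / b * t ^ ((n : ℝ) / p) := by
          gcongr
      _ = φ x s * s ^ ((n : ℝ) / p) := by field_simp
  rw [hae, hbe, ← ENNReal.ofReal_mul hb0.le]
  apply ENNReal.ofReal_le_ofReal
  calc a = b * ((a / b * t ^ ((n : ℝ) / p)) * t ^ (-((n : ℝ) / p))) := by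
        rw [Real.rpow_neg ht.le]
        field_simp
    _ ≤ _ := by gcongr

/-! ### The local estimate -/

/-- Over the balls through `y ∈ B(x,r)`: those of radius `t ≤ r` lie in `B(x,3r)`, hence see only
the truncations `fᵢ 1_{B(x,3r)}`, and those of radius `t > r` lie in `B(x,3t)`, hence are controlled
by the normalized `L^p` norms at radii larger than `r`. -/
lemma multMFrac_le {n m : ℕ} {p : Fin m → ℝ} (hp : ∀ i, 1 < p i)
    {f : Fin m → EuclideanSpace ℝ (Fin n) → ℝ} (hf : ∀ i, Measurable (f i))
    {x y : EuclideanSpace ℝ (Fin n)} {r : ℝ} (hy : y ∈ ball x r) {T : Fin m → ℝ≥0∞}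
    (hT : ∀ i t, r < t → avgN (p i) (f i) x t ≤ T i) :
    multMFrac n m 0 f y ≤
      max (∏ i, locMax r ((ball x (3 * r)).indicator fun z => ENNReal.ofReal |f i z|) y)
        (∏ i, ENNReal.ofReal (3 ^ ((n : ℝ) / p i)) * T i) := by
  refine iSup_le fun c => iSup_le fun t => iSup_le fun hyt => ?_
  have ht : 0 < t := pos_of_mem_ball hyt
  have hr : 0 < r := pos_of_mem_ball hy
  rw [zero_div, ENNReal.rpow_zero, one_mul]
  have hsub : ball c t ⊆ ball x (2 * t + r) := by
    intro z hz
    rw [mem_ball] at *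
    have h1 := dist_triangle z c x
    have h2 := dist_triangle c y x
    rw [dist_comm c y] at h2
    linarith
  rcases le_or_gt t r with htr | htr
  · refine le_max_of_le_left (Finset.prod_le_prod' fun i _ => ?_)
    refine le_trans (le_of_eq ?_) (le_locMax htr hyt)
    congr 1
    refine setLIntegral_congr_fun measurableSet_ball fun z hz => ?_
    rw [Set.indicator_of_mem]
    exact ball_subset_ball (by linarith) (hsub hz)
  · refine le_max_of_le_right (Finset.prod_le_prod' fun i _ => ?_)
    calc _ ≤ avgN (p i) (f i) c t := average_le_avgN (hp i) (hf i) c ht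
      _ ≤ ENNReal.ofReal (3 ^ ((n : ℝ) / p i)) * avgN (p i) (f i) x (3 * t) :=
        avgN_mono (by linarith [hp i]) ht (by norm_num)
          (hsub.trans (ball_subset_ball (by linarith)))
      _ ≤ _ := by
        gcongr
        exact hT i _ (by linarith)

/-- The local estimate: an average of `(M_{0,m} f)^q` over `B(x,r)` is controlled by bounds `T i` on
the normalized `L^{pᵢ}` norms of `fᵢ` over the larger concentric balls. -/
lemma local_estimate {n m : ℕ} {p : Fin m → ℝ} (hp : ∀ i, 1 < p i)
    {q : ℝ} (hq : 1 / q = ∑ i, 1 / p i) (hq1 : 1 < q) :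
    ∃ K : ℝ≥0∞, K ≠ ⊤ ∧ ∀ f : Fin m → EuclideanSpace ℝ (Fin n) → ℝ, (∀ i, Measurable (f i)) →
      ∀ (x : EuclideanSpace ℝ (Fin n)) (r : ℝ), 0 < r → ∀ T : Fin m → ℝ≥0∞,
        (∀ i t, r < t → avgN (p i) (f i) x t ≤ T i) →
        ((volume (ball x r))⁻¹ * ∫⁻ y in ball x r, (multMFrac n m 0 f y) ^ q) ^ (1 / q) ≤
          K * ∏ i, T i := by
  have hq0 : 0 < q := by linarith
  have hp0 : ∀ i, 0 < p i := fun i => by linarith [hp i]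
  choose K hK hMK using fun i => strong_locMax n (hp i)
  refine ⟨∏ i, (ENNReal.ofReal (3 ^ n) * K i) ^ (1 / p i) +
    ∏ i, ENNReal.ofReal (3 ^ ((n : ℝ) / p i)), ?_, fun f hf x r hr T hT => ?_⟩
  · refine ENNReal.add_ne_top.2 ⟨ENNReal.prod_ne_top fun i _ =>
      ENNReal.rpow_ne_top_of_nonneg (one_div_nonneg.2 (hp0 i).le)
        (ENNReal.mul_ne_top ENNReal.ofReal_ne_top (hK i)),
      ENNReal.prod_ne_top fun i _ => ENNReal.ofReal_ne_top⟩
  set g : Fin m → EuclideanSpace ℝ (Fin n) → ℝ≥0∞ := fun i =>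
    (ball x (3 * r)).indicator fun z => ENNReal.ofReal |f i z| with hg
  set A : ℝ≥0∞ := ∏ i, ENNReal.ofReal (3 ^ ((n : ℝ) / p i)) * T i with hA
  set μ : Measure (EuclideanSpace ℝ (Fin n)) :=
    (volume (ball x r))⁻¹ • volume.restrict (ball x r) with hμ
  have hμ1 : μ Set.univ = 1 := by
    simp [hμ, ENNReal.inv_mul_cancel (measure_ball_pos _ x hr).ne' measure_ball_lt_top.ne]
  have hgm : ∀ i, Measurable (g i) := fun i =>
    Measurable.indicator (by have := hf i; fun_prop) measurableSet_ball
  have hgt : ∀ i y, g i y ≠ ⊤ := fun i y => by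
    by_cases hy : y ∈ ball x (3 * r)
    · simp only [hg, Set.indicator_of_mem hy]; exact ENNReal.ofReal_ne_top
    · simp only [hg, Set.indicator_of_notMem hy]; exact ENNReal.zero_ne_top
  -- Each truncation, through the strong type inequality.
  have hpart : ∀ i, (∫⁻ y, (locMax r (g i) y) ^ (p i) ∂μ) ^ (1 / p i) ≤
      (ENNReal.ofReal (3 ^ n) * K i) ^ (1 / p i) * T i := by
    intro i
    have h1 : ∫⁻ y, (g i y) ^ (p i) =
        ∫⁻ y in ball x (3 * r), ENNReal.ofReal (|f i y| ^ p i) := by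
      rw [← lintegral_indicator measurableSet_ball]
      refine lintegral_congr fun y => ?_
      by_cases hy : y ∈ ball x (3 * r)
      · simp only [hg, Set.indicator_of_mem hy]
        exact ENNReal.ofReal_rpow_of_nonneg (abs_nonneg _) (hp0 i).le
      · simp only [hg, Set.indicator_of_notMem hy]
        exact ENNReal.zero_rpow_of_pos (hp0 i)
    calc (∫⁻ y, (locMax r (g i) y) ^ (p i) ∂μ) ^ (1 / p i)
        ≤ ((volume (ball x r))⁻¹ * (K i * ∫⁻ y, (g i y) ^ (p i))) ^ (1 / p i) := by
          refine ENNReal.rpow_le_rpow ?_ (one_div_nonneg.2 (hp0 i).le)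
          rw [hμ, lintegral_smul_measure, smul_eq_mul]
          refine mul_le_mul_right ?_ _
          exact (setLIntegral_le_lintegral _ _).trans (hMK i r (g i) (hgm i) (hgt i))
      _ = ((ENNReal.ofReal (3 ^ n) * K i) * ((volume (ball x (3 * r)))⁻¹ *
            ∫⁻ y in ball x (3 * r), ENNReal.ofReal (|f i y| ^ p i))) ^ (1 / p i) := by
          rw [h1, inv_volume_ball x x hr (by norm_num : (0 : ℝ) < 3)]
          congr 1
          ring
      _ = (ENNReal.ofReal (3 ^ n) * K i) ^ (1 / p i) * avgN (p i) (f i) x (3 * r) :=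
          ENNReal.mul_rpow_of_nonneg _ _ (one_div_nonneg.2 (hp0 i).le)
      _ ≤ _ := by
          gcongr
          exact hT i _ (by linarith)
  -- Hölder's inequality with the exponents `q / pᵢ`, which add up to `1`.
  have hsmall : (∫⁻ y, (∏ i, locMax r (g i) y) ^ q ∂μ) ^ (1 / q) ≤
      ∏ i, (ENNReal.ofReal (3 ^ n) * K i) ^ (1 / p i) * T i := by
    have hsum : ∑ i, q / p i = 1 := by
      have : ∑ i, q / p i = q * ∑ i, 1 / p i := by
        rw [Finset.mul_sum]
        exact Finset.sum_congr rfl fun i _ => by ring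
      rw [this, ← hq, mul_one_div_cancel hq0.ne']
    have hH := ENNReal.lintegral_prod_norm_pow_le (μ := μ) Finset.univ
      (f := fun i y => (locMax r (g i) y) ^ (p i))
      (fun i _ => ((measurable_locMax r (g i)).pow_const _).aemeasurable)
      hsum (fun i _ => div_nonneg hq0.le (hp0 i).le)
    calc (∫⁻ y, (∏ i, locMax r (g i) y) ^ q ∂μ) ^ (1 / q)
        = (∫⁻ y, ∏ i, ((locMax r (g i) y) ^ (p i)) ^ (q / p i) ∂μ) ^ (1 / q) := by
          congr 1
          refine lintegral_congr fun y => ?_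
          rw [← ENNReal.prod_rpow_of_nonneg hq0.le]
          refine Finset.prod_congr rfl fun i _ => ?_
          rw [← ENNReal.rpow_mul, mul_div_cancel₀ _ (hp0 i).ne']
      _ ≤ (∏ i, (∫⁻ y, (locMax r (g i) y) ^ (p i) ∂μ) ^ (q / p i)) ^ (1 / q) :=
          ENNReal.rpow_le_rpow hH (one_div_nonneg.2 hq0.le)
      _ = ∏ i, (∫⁻ y, (locMax r (g i) y) ^ (p i) ∂μ) ^ (1 / p i) := by
          rw [← ENNReal.prod_rpow_of_nonneg (one_div_nonneg.2 hq0.le)]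
          refine Finset.prod_congr rfl fun i _ => ?_
          rw [← ENNReal.rpow_mul]
          congr 1
          field_simp
      _ ≤ _ := Finset.prod_le_prod' fun i _ => hpart i
  calc ((volume (ball x r))⁻¹ * ∫⁻ y in ball x r, (multMFrac n m 0 f y) ^ q) ^ (1 / q)
      ≤ ((volume (ball x r))⁻¹ * ∫⁻ y in ball x r,
          ((∏ i, locMax r (g i) y) ^ q + A ^ q)) ^ (1 / q) := by
        refine ENNReal.rpow_le_rpow (mul_le_mul_right ?_ _) (one_div_nonneg.2 hq0.le)
        refine setLIntegral_mono' measurableSet_ball fun y hy => ?_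
        refine (ENNReal.rpow_le_rpow (multMFrac_le hp hf hy hT) hq0.le).trans ?_
        rcases le_total (∏ i, locMax r (g i) y) A with h | h
        · rw [max_eq_right h]; exact le_add_self
        · rw [max_eq_left h]; exact le_self_add
    _ = (∫⁻ y, (∏ i, locMax r (g i) y) ^ q ∂μ + A ^ q) ^ (1 / q) := by
        rw [← smul_eq_mul, ← lintegral_smul_measure, ← hμ,
          lintegral_add_right _ measurable_const, lintegral_const, hμ1, mul_one]
    _ ≤ (∫⁻ y, (∏ i, locMax r (g i) y) ^ q ∂μ) ^ (1 / q) + (A ^ q) ^ (1 / q) :=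
        ENNReal.rpow_add_le_add_rpow _ _ (one_div_nonneg.2 hq0.le)
          ((div_le_one hq0).2 hq1.le)
    _ ≤ ∏ i, (ENNReal.ofReal (3 ^ n) * K i) ^ (1 / p i) * T i + A := by
        refine add_le_add hsmall (le_of_eq ?_)
        rw [← ENNReal.rpow_mul, mul_one_div_cancel hq0.ne', ENNReal.rpow_one]
    _ = _ := by rw [hA, Finset.prod_mul_distrib, Finset.prod_mul_distrib, add_mul]

theorem stmt12 (n m : ℕ) (hn : 1 ≤ n) (hm : 1 ≤ m)
    (p : Fin m → ℝ) (hp : ∀ i, 1 < p i)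
    (q : ℝ) (hq : 1 / q = ∑ i, 1 / p i) (hq1 : 1 / q < 1)
    (φ : Fin m → EuclideanSpace ℝ (Fin n) → ℝ → ℝ)
    (ψ : EuclideanSpace ℝ (Fin n) → ℝ → ℝ)
    (hφm : ∀ i, Measurable (fun z : EuclideanSpace ℝ (Fin n) × ℝ => φ i z.1 z.2))
    (hφpos : ∀ i x r, 0 < r → 0 < φ i x r)
    (hψm : Measurable (fun z : EuclideanSpace ℝ (Fin n) × ℝ => ψ z.1 z.2))
    (hψpos : ∀ x r, 0 < r → 0 < ψ x r)
    (C : ℝ) (hC : 0 < C)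
    (hcond : ∀ x r, 0 < r →
      (∏ i, ⨆ (t : ℝ) (_ : r < t),
        ENNReal.ofReal
          ((essInf (fun s => φ i x s * s ^ ((n : ℝ) / p i)) (volume.restrict (Set.Ioi t))) *
            t ^ (-((n : ℝ) / p i)))) ≤
      ENNReal.ofReal (C * ψ x r)) :
    ∃ C' > (0 : ℝ), ∀ f : Fin m → EuclideanSpace ℝ (Fin n) → ℝ,
      (∀ i, Measurable (f i)) →
      (∀ i x r, 0 < r → (∫⁻ y in ball x r, ENNReal.ofReal (|f i y| ^ p i)) < ⊤) →
      (∀ i, morreyNorm (p i) (φ i) (f i) < ⊤) →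
      morreyNormE q ψ (multMFrac n m 0 f) ≤
        ENNReal.ofReal C' * ∏ i, morreyNorm (p i) (φ i) (f i) := by
  have hpp : ∀ i, 0 < p i := fun i => by linarith [hp i]
  have hqinv : 0 < 1 / q := by
    rw [hq]
    exact Finset.sum_pos (fun i _ => one_div_pos.2 (hpp i)) ⟨⟨0, hm⟩, Finset.mem_univ _⟩
  have hq0 : 0 < q := one_div_pos.1 hqinv
  obtain ⟨K, hK, hloc⟩ := local_estimate (n := n) hp hq ((div_lt_one hq0).1 hq1)
  -- Adding `1` makes the constant positive.
  refine ⟨(K.toReal + 1) * C, mul_pos (by positivity) hC, fun f hf _ hfin => ?_⟩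
  refine iSup_le fun x => iSup_le fun r => iSup_le fun hr => ?_
  set S : Fin m → ℝ≥0∞ := fun i => ⨆ (t : ℝ) (_ : r < t), ENNReal.ofReal
    ((essInf (fun s => φ i x s * s ^ ((n : ℝ) / p i)) (volume.restrict (Set.Ioi t))) *
      t ^ (-((n : ℝ) / p i))) with hS
  have hT : ∀ i t, r < t → avgN (p i) (f i) x t ≤ morreyNorm (p i) (φ i) (f i) * S i := by
    intro i t ht
    refine (avgN_le_essInf (hpp i) (hr.trans ht) (hφpos i x) (hfin i)).trans
      (mul_le_mul_right ?_ _)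
    exact le_iSup_of_le t (le_iSup_of_le ht le_rfl)
  have hψ := hψpos x r hr
  have hKle : K ≤ ENNReal.ofReal (K.toReal + 1) := by
    rw [← ENNReal.ofReal_toReal hK]
    apply ENNReal.ofReal_le_ofReal
    simp
  calc _ ≤ ENNReal.ofReal ((ψ x r)⁻¹) * (K * ∏ i, morreyNorm (p i) (φ i) (f i) * S i) :=
        mul_le_mul_right (hloc f hf x r hr _ hT) _
    _ ≤ ENNReal.ofReal ((ψ x r)⁻¹) * (ENNReal.ofReal (K.toReal + 1) *
          ((∏ i, morreyNorm (p i) (φ i) (f i)) * ENNReal.ofReal (C * ψ x r))) := by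
        rw [Finset.prod_mul_distrib]
        exact mul_le_mul_right (mul_le_mul' hKle (mul_le_mul_right (hcond x r hr) _)) _
    _ = (ENNReal.ofReal ((ψ x r)⁻¹) * ENNReal.ofReal (K.toReal + 1) * ENNReal.ofReal (C * ψ x r)) *
          ∏ i, morreyNorm (p i) (φ i) (f i) := by ring
    _ = _ := by
        rw [← ENNReal.ofReal_mul (by positivity), ← ENNReal.ofReal_mul (by positivity)]
        congr 2
        field_simp
end
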